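/- Let X₁, X₂ be locally compact Polish metric spaces, let C : X₁ × 𝒫(X₂) → (−∞,+∞] be lower semi-continuous, bounded from below, with C(x₁,·) convex on 𝒫(X₂) for every x₁ ∈ X₁, and let F₁, F₂ be superlinear admissible entropy functions such that F₂ has property (BM) on X₂. Then for every μ₁ ∈ ℳ(X₁) and μ₂ ∈ ℳ(X₂): ℰ_C(μ₁,μ₂) = sup_{(φ₁,φ₂)∈Λ} Σ_{i=1}^2 ∫_{X_i} F_i°(φ_i) dμ_i = sup_{(φ₁,φ₂)∈Λ_R} Σ_{i=1}^2 ∫_{X_i} φ_i dμ_i = sup_{φ∈C_b(X₂)} [∫_{X₁} F₁°(R_C φ) dμ₁ + ∫_{X₂} F₂°(−φ) dμ₂], where R_C φ(x₁) := inf_{p∈𝒫(X₂)} {C(x₁,p) + ∫_{X₂} φ dp}. -/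

import Mathlib

open MeasureTheory Filter Set Topology
open scoped ENNReal NNReal BoundedContinuousFunction

noncomputable section

/-- The "positive part" of an extended real number, as an element of `ℝ≥0∞`. -/
def posE (a : EReal) : ℝ≥0∞ := if a = ⊤ then ⊤ else ENNReal.ofReal a.toReal

/-- Integral of an `EReal`-valued function: positive part minus negative part
(in `EReal`, so that it is always defined). -/
def eIntegral {α : Type*} [MeasurableSpace α] (μ : Measure α) (f : α → EReal) : EReal :=
  ((∫⁻ x, posE (f x) ∂μ : ℝ≥0∞) : EReal) - ((∫⁻ x, posE (-(f x)) ∂μ : ℝ≥0∞) : EReal)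

/-- The recession constant `lim_{s→∞} G(s)/s` (as a `limsup`, which coincides with the
limit for convex functions). -/
def recessionOf (G : ℝ → ℝ≥0∞) : ℝ≥0∞ :=
  Filter.limsup (fun s : ℝ => G s / ENNReal.ofReal s) Filter.atTop

/-- An admissible entropy function: a convex, lower semicontinuous function
`F : [0,∞) → [0,∞]` which is finite at some positive point. -/
structure EntropyFn where
  F : ℝ → ℝ≥0∞
  convex' : ∀ a ∈ Ici (0:ℝ), ∀ b ∈ Ici (0:ℝ), ∀ t : ℝ, 0 ≤ t → t ≤ 1 →
    F (t * a + (1 - t) * b) ≤ ENNReal.ofReal t * F a + ENNReal.ofReal (1 - t) * F b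
  lsc : LowerSemicontinuousOn F (Ici (0:ℝ))
  dom : ∃ s : ℝ, 0 < s ∧ F s ≠ ∞

namespace EntropyFn

/-- The recession constant `F'_∞ = lim_{s→∞} F(s)/s`. -/
def recC (F : EntropyFn) : ℝ≥0∞ := recessionOf F.F

/-- `F` is superlinear if `F'_∞ = ∞`. -/
def Superlinear (F : EntropyFn) : Prop := F.recC = ∞

/-- `F°(φ) := inf_{s ≥ 0} (φ·s + F(s))`, extended to `EReal` arguments. -/
def circ (F : EntropyFn) (φ : EReal) : EReal :=
  ⨅ s : Ici (0:ℝ), φ * ((s : ℝ) : EReal) + ((F.F (s : ℝ) : ℝ≥0∞) : EReal)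

/-- The (interior of the) domain of `F°` is taken inside the set where `F°` is not `-∞`. -/
def circDom (F : EntropyFn) : Set ℝ := {φ : ℝ | F.circ (φ : EReal) ≠ ⊥}

/-- The reverse entropy function `R(r) = r·F(1/r)` for `r > 0`, with `R(0) = F'_∞`. -/
def revF (F : EntropyFn) (r : ℝ) : ℝ≥0∞ :=
  if 0 < r then ENNReal.ofReal r * F.F (1 / r) else F.recC

/-- The Legendre conjugate `R*(ψ) = sup_{s ≥ 0} (s·ψ − R(s))` of the reverse function. -/
def revConj (F : EntropyFn) (ψ : ℝ) : EReal :=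
  ⨆ s : Ici (0:ℝ), (((s : ℝ) * ψ : ℝ) : EReal) - ((F.revF (s : ℝ) : ℝ≥0∞) : EReal)

end EntropyFn

/-- The entropy functional `ℱ(γ|μ) = ∫ F(dγ/dμ) dμ + F'_∞ · γ^⊥(X)`, where
`γ = (dγ/dμ)·μ + γ^⊥` is the Lebesgue decomposition of `γ` with respect to `μ`. -/
def entF {X : Type*} [MeasurableSpace X] (F : EntropyFn) (γ μ : Measure X) : ℝ≥0∞ :=
  (∫⁻ x, F.F ((γ.rnDeriv μ x).toReal) ∂μ) + F.recC * (γ.singularPart μ) Set.univ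

/-- The reverse entropy functional `ℛ(μ|γ) = ∫ R(dμ/dγ) dγ + R'_∞ · μ^⊥(X)`. -/
def revEntF {X : Type*} [MeasurableSpace X] (F : EntropyFn) (μ γ : Measure X) : ℝ≥0∞ :=
  (∫⁻ x, F.revF ((μ.rnDeriv γ x).toReal) ∂γ) + recessionOf F.revF * (μ.singularPart γ) Set.univ

section WOET

variable {X₁ X₂ : Type*} [MeasurableSpace X₁] [MeasurableSpace X₂]

/-- The weak entropy-transport cost
`ℰ_C(γ|μ₁,μ₂) = ℱ₁(γ₁|μ₁) + ℱ₂(γ₂|μ₂) + ∫ C(x₁, γ_{x₁}) dγ₁(x₁)`. -/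
def wCost [StandardBorelSpace X₂] [Nonempty X₂]
    (C : X₁ → ProbabilityMeasure X₂ → EReal) (F₁ F₂ : EntropyFn)
    (μ₁ : Measure X₁) (μ₂ : Measure X₂)
    (γ : Measure (X₁ × X₂)) (hγ : IsFiniteMeasure γ) : EReal :=
  haveI := hγ
  ((entF F₁ γ.fst μ₁ : ℝ≥0∞) : EReal) + ((entF F₂ γ.snd μ₂ : ℝ≥0∞) : EReal) +
    eIntegral γ.fst (fun x₁ => C x₁ ⟨γ.condKernel x₁, inferInstance⟩)

/-- The weak optimal entropy-transport value `ℰ_C(μ₁,μ₂)`. -/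
def wOpt [StandardBorelSpace X₂] [Nonempty X₂]
    (C : X₁ → ProbabilityMeasure X₂ → EReal) (F₁ F₂ : EntropyFn)
    (μ₁ : Measure X₁) (μ₂ : Measure X₂) : EReal :=
  sInf { e : EReal | ∃ (γ : Measure (X₁ × X₂)) (hγ : IsFiniteMeasure γ),
    e = wCost C F₁ F₂ μ₁ μ₂ γ hγ }

variable [TopologicalSpace X₁] [TopologicalSpace X₂]

/-- The dual feasible set `Λ`. -/
def lamSet (C : X₁ → ProbabilityMeasure X₂ → EReal) (F₁ F₂ : EntropyFn) :
    Set ((X₁ →ᵇ ℝ) × (X₂ →ᵇ ℝ)) :=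
  { φ | (∀ x, φ.1 x ∈ interior F₁.circDom) ∧ (∀ x, φ.2 x ∈ interior F₂.circDom) ∧
      ∀ (x₁ : X₁) (p : ProbabilityMeasure X₂),
        ((φ.1 x₁ + ∫ x₂, φ.2 x₂ ∂(p : Measure X₂) : ℝ) : EReal) ≤ C x₁ p }

/-- The dual feasible set `Λ_R`. -/
def lamRSet (C : X₁ → ProbabilityMeasure X₂ → EReal) (F₁ F₂ : EntropyFn) :
    Set ((X₁ →ᵇ ℝ) × (X₂ →ᵇ ℝ)) :=
  { φ | (∃ b : ℝ, ((b : ℝ) : EReal) < ((F₁.F 0 : ℝ≥0∞) : EReal) ∧ ∀ x, φ.1 x ≤ b) ∧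
        (∃ b : ℝ, ((b : ℝ) : EReal) < ((F₂.F 0 : ℝ≥0∞) : EReal) ∧ ∀ x, φ.2 x ≤ b) ∧
        ∀ (x₁ : X₁) (p : ProbabilityMeasure X₂),
          F₁.revConj (φ.1 x₁) + eIntegral (p : Measure X₂) (fun x₂ => F₂.revConj (φ.2 x₂))
            ≤ C x₁ p }

/-- The dual feasible set `Λ_ET` (constraints tested against all pairs of nonnegative finite
measures; on all other signed measures `ET = +∞`, so those constraints are vacuous). -/
def lamETSet [StandardBorelSpace X₂] [Nonempty X₂]
    (C : X₁ → ProbabilityMeasure X₂ → EReal) (F₁ F₂ : EntropyFn) :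
    Set ((X₁ →ᵇ ℝ) × (X₂ →ᵇ ℝ)) :=
  { φ | ∀ (μ₁ : Measure X₁) (μ₂ : Measure X₂), IsFiniteMeasure μ₁ → IsFiniteMeasure μ₂ →
      (((∫ x, φ.1 x ∂μ₁) + ∫ x, φ.2 x ∂μ₂ : ℝ) : EReal) ≤ wOpt C F₁ F₂ μ₁ μ₂ }

/-- The set `Λ_ET^<`. -/
def lamETltSet [StandardBorelSpace X₂] [Nonempty X₂]
    (C : X₁ → ProbabilityMeasure X₂ → EReal) (F₁ F₂ : EntropyFn) :
    Set ((X₁ →ᵇ ℝ) × (X₂ →ᵇ ℝ)) :=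
  { φ ∈ lamETSet C F₁ F₂ |
      (∃ b : ℝ, ((b : ℝ) : EReal) < ((F₁.F 0 : ℝ≥0∞) : EReal) ∧ ∀ x, φ.1 x ≤ b) ∧
      (∃ b : ℝ, ((b : ℝ) : EReal) < ((F₂.F 0 : ℝ≥0∞) : EReal) ∧ ∀ x, φ.2 x ≤ b) }

/-- `R_C φ(x₁) := inf_{p ∈ 𝒫(X₂)} (C(x₁,p) + ∫ φ dp)`. -/
def RCfun (C : X₁ → ProbabilityMeasure X₂ → EReal) (φ : X₂ →ᵇ ℝ) (x₁ : X₁) : EReal :=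
  ⨅ p : ProbabilityMeasure X₂, C x₁ p + ((∫ x₂, φ x₂ ∂(p : Measure X₂) : ℝ) : EReal)

/-- Property (BM) of an admissible entropy function on a space `X`. -/
def HasBM (X : Type*) [TopologicalSpace X] [MeasurableSpace X] (F : EntropyFn) : Prop :=
  ∀ ψ : X →ᵇ ℝ, (∃ b : ℝ, ((b : ℝ) : EReal) < ((F.F 0 : ℝ≥0∞) : EReal) ∧ ∀ x, ψ x ≤ b) →
    ∃ s : X → ℝ, Measurable s ∧ (∃ M : ℝ, ∀ x, |s x| ≤ M) ∧ (∀ x, 0 < s x) ∧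
      ∀ x, ((F.revF (s x) : ℝ≥0∞) : EReal) + F.revConj (ψ x) = ((s x * ψ x : ℝ) : EReal)

end WOET

/-- The functional `ET` extended to pairs of finite signed measures:
it equals `ℰ_C(μ₁,μ₂)` when both arguments are (induced by) nonnegative finite measures,
and `+∞` otherwise. -/
def ETsgn {X₁ X₂ : Type*} [MeasurableSpace X₁] [MeasurableSpace X₂]
    [StandardBorelSpace X₂] [Nonempty X₂]
    (C : X₁ → ProbabilityMeasure X₂ → EReal) (F₁ F₂ : EntropyFn)
    (ν₁ : SignedMeasure X₁) (ν₂ : SignedMeasure X₂) : EReal :=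
  sInf { e : EReal | ∃ (μ₁ : Measure X₁) (h₁ : IsFiniteMeasure μ₁)
      (μ₂ : Measure X₂) (h₂ : IsFiniteMeasure μ₂),
      ν₁ = @Measure.toSignedMeasure X₁ _ μ₁ h₁ ∧ ν₂ = @Measure.toSignedMeasure X₂ _ μ₂ h₂ ∧
      e = wOpt C F₁ F₂ μ₁ μ₂ }

section Martingale

variable {X : Set ℝ}

/-- The martingale condition for a finite measure on `X × X`:
`∫ y dγ_x(y) = x` for `γ₁`-a.e. `x`. -/
def martCond [StandardBorelSpace ↥X] [Nonempty ↥X]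
    (γ : Measure (↥X × ↥X)) (hγ : IsFiniteMeasure γ) : Prop :=
  haveI := hγ
  ∀ᵐ x ∂γ.fst, (∫ y, (y : ℝ) ∂(γ.condKernel x)) = (x : ℝ)

/-- The martingale optimal entropy transport value `ℰ_M(μ₁,μ₂)` (with an `EReal`-valued
cost `c`). -/
def eMart [StandardBorelSpace ↥X] [Nonempty ↥X]
    (c : ↥X → ↥X → EReal) (F₁ F₂ : EntropyFn) (μ₁ μ₂ : Measure ↥X) : EReal :=
  sInf { e : EReal | ∃ (γ : Measure (↥X × ↥X)) (hγ : IsFiniteMeasure γ), martCond γ hγ ∧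
    e = ((entF F₁ γ.fst μ₁ : ℝ≥0∞) : EReal) + ((entF F₂ γ.snd μ₂ : ℝ≥0∞) : EReal) +
        eIntegral γ (fun q => c q.1 q.2) }

/-- The martingale optimal entropy transport value `ℰ_M(μ₁,μ₂)` (with a `[0,∞]`-valued
cost `c`). -/
def eMartNN [StandardBorelSpace ↥X] [Nonempty ↥X]
    (c : ↥X → ↥X → ℝ≥0∞) (F₁ F₂ : EntropyFn) (μ₁ μ₂ : Measure ↥X) : EReal :=
  sInf { e : EReal | ∃ (γ : Measure (↥X × ↥X)) (hγ : IsFiniteMeasure γ), martCond γ hγ ∧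
    e = ((entF F₁ γ.fst μ₁ + entF F₂ γ.snd μ₂ + ∫⁻ q, c q.1 q.2 ∂γ : ℝ≥0∞) : EReal) }

/-- The dual feasible set `Λ_M` for the martingale problem. -/
def lamM (c : ↥X → ↥X → EReal) (F₁ F₂ : EntropyFn) : Set ((↥X →ᵇ ℝ) × (↥X →ᵇ ℝ)) :=
  { φ | (∀ x, φ.1 x ∈ interior F₁.circDom) ∧ (∀ x, φ.2 x ∈ interior F₂.circDom) ∧
      ∃ h : ↥X →ᵇ ℝ, ∀ x₁ x₂ : ↥X,
        ((φ.1 x₁ + φ.2 x₂ + h x₁ * ((x₂ : ℝ) - (x₁ : ℝ)) : ℝ) : EReal) ≤ c x₁ x₂ }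

/-- The perspective function `r·F(θ/r)` with the convention `r·F(θ/r) = θ·F'_∞` for `r = 0`. -/
def perspFn (F : EntropyFn) (r θ : ℝ) : ℝ≥0∞ :=
  if r = 0 then ENNReal.ofReal θ * F.recC else ENNReal.ofReal r * F.F (θ / r)

/-- The homogeneous marginal perspective cost `H(x₁,r₁;x₂,r₂)` (the dependence on
`(x₁,x₂)` is through the value `c = c(x₁,x₂)`). -/
def Hcost (F₁ F₂ : EntropyFn) (c : ℝ≥0∞) (r₁ r₂ : ℝ) : ℝ≥0∞ :=
  if c ≠ ∞ then
    ⨅ θ : Ioi (0:ℝ), perspFn F₁ r₁ (θ : ℝ) + perspFn F₂ r₂ (θ : ℝ) + ENNReal.ofReal (θ : ℝ) * c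
  else F₁.F 0 * ENNReal.ofReal r₁ + F₂.F 0 * ENNReal.ofReal r₂

/-- The functional `ℋ(μ₁,μ₂|γ)`. -/
def hMargFun (F₁ F₂ : EntropyFn) (c : ↥X → ↥X → ℝ≥0∞) (μ₁ μ₂ : Measure ↥X)
    (γ : Measure (↥X × ↥X)) : ℝ≥0∞ :=
  (∫⁻ q, Hcost F₁ F₂ (c q.1 q.2) ((μ₁.rnDeriv γ.fst q.1).toReal)
      ((μ₂.rnDeriv γ.snd q.2).toReal) ∂γ)
    + F₁.F 0 * (μ₁.singularPart γ.fst) Set.univ + F₂.F 0 * (μ₂.singularPart γ.snd) Set.univ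

/-- The functional `ℛ(μ₁,μ₂|γ)`. -/
def rMargFun (F₁ F₂ : EntropyFn) (c : ↥X → ↥X → ℝ≥0∞) (μ₁ μ₂ : Measure ↥X)
    (γ : Measure (↥X × ↥X)) : ℝ≥0∞ :=
  revEntF F₁ μ₁ γ.fst + revEntF F₂ μ₂ γ.snd + ∫⁻ q, c q.1 q.2 ∂γ

/-- The first `p`-homogeneous marginal of a measure on `Y × Y`, `Y = X × [0,∞)`. -/
def hMarg1 (p : ℝ) (α : Measure ((↥X × ℝ≥0) × (↥X × ℝ≥0))) : Measure ↥X :=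
  Measure.map (fun q => q.1.1) (α.withDensity fun q => (q.1.2 : ℝ≥0∞) ^ p)

/-- The second `p`-homogeneous marginal of a measure on `Y × Y`, `Y = X × [0,∞)`. -/
def hMarg2 (p : ℝ) (α : Measure ((↥X × ℝ≥0) × (↥X × ℝ≥0))) : Measure ↥X :=
  Measure.map (fun q => q.2.1) (α.withDensity fun q => (q.2.2 : ℝ≥0∞) ^ p)

/-- Membership in the homogeneous constraint set `ℋ^p_{M,≤}(μ₁,μ₂)`. -/
def memHpM (p : ℝ) (μ₁ μ₂ : Measure ↥X) (α : Measure ((↥X × ℝ≥0) × (↥X × ℝ≥0))) : Prop :=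
  IsFiniteMeasure α ∧ (∫⁻ q, (q.1.2 : ℝ≥0∞) ^ p + (q.2.2 : ℝ≥0∞) ^ p ∂α) ≠ ∞ ∧
    hMarg1 p α ≤ μ₁ ∧ hMarg2 p α ≤ μ₂ ∧
    ∀ h : ↥X →ᵇ ℝ, (∫ q, h q.1.1 * ((q.2.1 : ℝ) - (q.1.1 : ℝ)) ∂α) = 0

end Martingale


noncomputable section
open MeasureTheory Filter Set Topology
open scoped ENNReal NNReal BoundedContinuousFunction

lemma sep_lemma {E : Type*} [NormedAddCommGroup E] [NormedSpace ℝ E] (A : Set (E × ℝ))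
    (hconv : Convex ℝ A) (hup : ∀ y t t', (y, t) ∈ A → t ≤ t' → (y, t') ∈ A) (m : ℝ)
    (hlow : ∀ y t, (y, t) ∈ A → m ≤ t) (x : E) (t0 : ℝ) (hx : (x, t0) ∉ closure A) :
    ∃ (l : E →L[ℝ] ℝ) (c : ℝ), (∀ y t, (y, t) ∈ A → l y + c ≤ t) ∧ t0 < l x + c := by
  rcases A.eq_empty_or_nonempty with rfl | ⟨⟨y0, s0⟩, hy0⟩
  · exact ⟨0, t0 + 1, by simp, by simp⟩
  obtain ⟨f, u, h1, h2⟩ := geometric_hahn_banach_point_closed hconv.closure isClosed_closure hx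
  set f1 : E →L[ℝ] ℝ := f.comp (ContinuousLinearMap.inl ℝ E ℝ) with hf1
  set α : ℝ := f (0, 1) with hα
  have hf : ∀ y t, f (y, t) = f1 y + α * t := by
    intro y t
    have : (y, t) = (y, (0:ℝ)) + t • ((0:E), (1:ℝ)) := by simp
    rw [this, map_add, map_smul]
    simp [hf1, hα, mul_comm]
  have h2' : ∀ y t, (y, t) ∈ A → u < f1 y + α * t := fun y t h => by
    rw [← hf]; exact h2 _ (subset_closure h)
  rw [hf] at h1
  have hα0 : 0 ≤ α := by
    by_contra hneg
    push Not at hneg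
    have h := h2' y0 (max s0 ((u - f1 y0) / α)) (hup _ _ _ hy0 (le_max_left _ _))
    have h3 : α * max s0 ((u - f1 y0) / α) ≤ α * ((u - f1 y0) / α) :=
      mul_le_mul_of_nonpos_left (le_max_right _ _) hneg.le
    rw [mul_div_cancel₀ _ hneg.ne] at h3
    linarith
  rcases hα0.eq_or_lt with h0 | hpos
  · rw [← h0] at h1 h2'
    set η := u - f1 x with hη
    have hηp : 0 < η := by linarith
    set lam := (|t0 - m| + 1) / η with hlam
    have hlp : 0 < lam := by positivity
    refine ⟨-(lam • f1), m + lam * u, ?_, ?_⟩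
    · intro y t h
      have a := h2' y t h
      have b := hlow y t h
      simp only [ContinuousLinearMap.neg_apply, ContinuousLinearMap.smul_apply, smul_eq_mul]
      nlinarith
    · simp only [ContinuousLinearMap.neg_apply, ContinuousLinearMap.smul_apply, smul_eq_mul]
      have : lam * η = |t0 - m| + 1 := div_mul_cancel₀ _ hηp.ne'
      have h5 := le_abs_self (t0 - m)
      have h6 : lam * η = lam * u - lam * f1 x := by rw [hη]; ring
      linarith
  · refine ⟨-(α⁻¹ • f1), u / α, ?_, ?_⟩
    · intro y t h
      have a := h2' y t h
      simp only [ContinuousLinearMap.neg_apply, ContinuousLinearMap.smul_apply, smul_eq_mul]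
      rw [show -(α⁻¹ * f1 y) + u / α = (u - f1 y) / α by field_simp; ring, div_le_iff₀ hpos]
      linarith
    · simp only [ContinuousLinearMap.neg_apply, ContinuousLinearMap.smul_apply, smul_eq_mul]
      rw [show -(α⁻¹ * f1 x) + u / α = (u - f1 x) / α by field_simp; ring, lt_div_iff₀ hpos]
      linarith
end

noncomputable section
open MeasureTheory Filter Set Topology
open scoped ENNReal NNReal BoundedContinuousFunction
namespace EntropyFn

lemma le_circ_iff (F : EntropyFn) (c φ : ℝ) : (c : EReal) ≤ F.circ φ ↔
    ∀ s : ℝ, 0 ≤ s → F.F s ≠ ∞ → c ≤ φ * s + (F.F s).toReal := by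
  unfold circ
  rw [le_iInf_iff]
  constructor
  · intro h s hs hF
    have := h ⟨s, hs⟩
    rw [← EReal.coe_ennreal_toReal hF] at this
    exact_mod_cast this
  · rintro h ⟨s, hs⟩
    by_cases hF : F.F s = ∞
    · simp only [hF]
      rw [← EReal.coe_mul, EReal.coe_ennreal_top, EReal.coe_add_top]
      exact le_top
    · have := h s hs hF
      simp only
      rw [← EReal.coe_ennreal_toReal hF]
      exact_mod_cast this

lemma convexR (F : EntropyFn) {a b t : ℝ} (ha : 0 ≤ a) (hb : 0 ≤ b) (ht : 0 ≤ t) (ht1 : t ≤ 1)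
    (hFa : F.F a ≠ ∞) (hFb : F.F b ≠ ∞) : F.F (t * a + (1 - t) * b) ≠ ∞ ∧
    (F.F (t * a + (1 - t) * b)).toReal ≤ t * (F.F a).toReal + (1 - t) * (F.F b).toReal := by
  have h := F.convex' a ha b hb t ht ht1
  have h2 : ENNReal.ofReal t * F.F a + ENNReal.ofReal (1 - t) * F.F b ≠ ∞ :=
    ENNReal.add_ne_top.2 ⟨ENNReal.mul_ne_top ENNReal.ofReal_ne_top hFa,
      ENNReal.mul_ne_top ENNReal.ofReal_ne_top hFb⟩
  refine ⟨ne_top_of_le_ne_top h2 h, ?_⟩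
  have := ENNReal.toReal_mono h2 h
  rw [ENNReal.toReal_add (ENNReal.mul_ne_top ENNReal.ofReal_ne_top hFa)
      (ENNReal.mul_ne_top ENNReal.ofReal_ne_top hFb), ENNReal.toReal_mul, ENNReal.toReal_mul,
      ENNReal.toReal_ofReal ht, ENNReal.toReal_ofReal (by linarith)] at this
  exact this

lemma superlin_bound (F : EntropyFn) (h : F.Superlinear) (a : ℝ) :
    ∃ b : ℝ, ∀ s : ℝ, 0 ≤ s → F.F s ≠ ∞ → a * s - b ≤ (F.F s).toReal := by
  obtain ⟨s0, hs0, hF0⟩ := F.dom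
  set A := |a| + 1 with hA
  have hApos : 0 < A := by positivity
  have hfreq : ∃ᶠ s in atTop, ENNReal.ofReal A < F.F s / ENNReal.ofReal s := by
    have : ENNReal.ofReal A < limsup (fun s : ℝ => F.F s / ENNReal.ofReal s) atTop := by
      have : limsup (fun s : ℝ => F.F s / ENNReal.ofReal s) atTop = ∞ := h
      rw [this]; exact ENNReal.ofReal_lt_top
    exact frequently_lt_of_lt_limsup (by isBoundedDefault) this
  obtain ⟨s1, h1, h2⟩ := (hfreq.and_eventually
    (eventually_ge_atTop (max (s0 + 1) ((F.F s0).toReal)))).exists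
  have hs1 : s0 + 1 ≤ s1 := (le_max_left _ _).trans h2
  have hs1' : (F.F s0).toReal ≤ s1 := (le_max_right _ _).trans h2
  have hs1p : 0 < s1 := by linarith
  have h3 : F.F s1 ≠ ∞ → A * s1 ≤ (F.F s1).toReal := by
    intro hfin
    have h4 : ENNReal.ofReal A * ENNReal.ofReal s1 ≤ F.F s1 := by
      have := (ENNReal.lt_div_iff_mul_lt (Or.inl (by simpa using hs1p)) (Or.inl (by simp))).1 h1
      exact this.le
    rw [← ENNReal.ofReal_mul hApos.le] at h4
    exact (ENNReal.ofReal_le_iff_le_toReal hfin).1 h4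
  refine ⟨|a| * s1, fun s hs hF => ?_⟩
  have haa := le_abs_self a
  rcases le_total s s1 with hle | hle
  · have : 0 ≤ (F.F s).toReal := ENNReal.toReal_nonneg
    have h5 : a * s ≤ |a| * s := by gcongr
    have h6 : |a| * s ≤ |a| * s1 := by gcongr
    linarith
  · -- s1 between s0 and s
    have hd : 0 < s - s0 := by linarith
    set t := (s1 - s0) / (s - s0) with ht
    have ht0 : 0 < t := div_pos (by linarith) hd
    have ht1 : t ≤ 1 := by rw [ht, div_le_one hd]; linarith
    have heq : t * s + (1 - t) * s0 = s1 := by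
      have : t * (s - s0) = s1 - s0 := div_mul_cancel₀ _ hd.ne'
      linarith
    obtain ⟨c1, c2⟩ := F.convexR hs hs0.le ht0.le ht1 hF hF0
    rw [heq] at c1 c2
    have h7 := h3 c1
    have h8 : (1 - t) * (F.F s0).toReal ≤ (F.F s0).toReal := by
      have : 0 ≤ (F.F s0).toReal := ENNReal.toReal_nonneg
      nlinarith
    have h9 : |a| * s1 ≤ t * (F.F s).toReal := by rw [hA] at h7; nlinarith
    have h10 : t * (s - s0) = s1 - s0 := div_mul_cancel₀ _ hd.ne'
    have h11 : |a| * (t * (s - s0)) ≤ t * (F.F s).toReal := by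
      rw [h10]
      have : |a| * (s1 - s0) ≤ |a| * s1 := by gcongr; linarith
      linarith
    have h12 : |a| * (s - s0) ≤ (F.F s).toReal := by
      have : t * (|a| * (s - s0)) ≤ t * (F.F s).toReal := by linarith
      exact le_of_mul_le_mul_left this ht0
    have h5 : a * s ≤ |a| * s := by gcongr
    have h6 : |a| * s0 ≤ |a| * s1 := by gcongr; linarith
    linarith

def circR (F : EntropyFn) (φ : ℝ) : ℝ := (F.circ φ).toReal

lemma circ_le (F : EntropyFn) (φ : EReal) {s : ℝ} (hs : 0 ≤ s) :
    F.circ φ ≤ φ * (s : EReal) + (F.F s : EReal) :=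
  iInf_le (fun s : Ici (0:ℝ) => φ * ((s : ℝ) : EReal) + ((F.F (s : ℝ) : ℝ≥0∞) : EReal)) ⟨s, hs⟩

lemma circ_mono (F : EntropyFn) : Monotone F.circ := by
  intro a b hab
  unfold circ
  refine iInf_mono fun s => ?_
  gcongr
  have : (0:ℝ) ≤ s := s.2
  exact_mod_cast this

lemma coe_circR (F : EntropyFn) (h : F.Superlinear) (φ : ℝ) : (F.circR φ : EReal) = F.circ φ := by
  refine EReal.coe_toReal ?_ ?_
  · obtain ⟨s0, hs0, hF0⟩ := F.dom
    have := F.circ_le φ hs0.le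
    rw [← EReal.coe_ennreal_toReal hF0] at this
    exact ne_top_of_le_ne_top (by exact_mod_cast EReal.coe_ne_top _) this
  · obtain ⟨b, hb⟩ := F.superlin_bound h (-φ)
    have : ((-b : ℝ) : EReal) ≤ F.circ φ := by
      rw [le_circ_iff]
      intro s hs hF
      have := hb s hs hF
      linarith
    exact ne_bot_of_le_ne_bot (EReal.coe_ne_bot _) this

lemma le_circR_iff (F : EntropyFn) (h : F.Superlinear) (c φ : ℝ) : c ≤ F.circR φ ↔
    ∀ s : ℝ, 0 ≤ s → F.F s ≠ ∞ → c ≤ φ * s + (F.F s).toReal := by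
  rw [← le_circ_iff, ← F.coe_circR h, EReal.coe_le_coe_iff]

lemma circR_le (F : EntropyFn) (h : F.Superlinear) (φ : ℝ) {s : ℝ} (hs : 0 ≤ s) (hF : F.F s ≠ ∞) :
    F.circR φ ≤ φ * s + (F.F s).toReal := (F.le_circR_iff h _ _).1 le_rfl s hs hF

lemma circR_mono (F : EntropyFn) (h : F.Superlinear) : Monotone F.circR := by
  intro a b hab
  rw [← EReal.coe_le_coe_iff, F.coe_circR h, F.coe_circR h]
  exact F.circ_mono (by exact_mod_cast hab)

lemma circR_zero_nonneg (F : EntropyFn) (h : F.Superlinear) : 0 ≤ F.circR 0 := by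
  rw [F.le_circR_iff h]
  intro s _ _
  simp

lemma circR_concave (F : EntropyFn) (h : F.Superlinear) : ConcaveOn ℝ univ F.circR := by
  refine ⟨convex_univ, fun x _ y _ a b ha hb hab => ?_⟩
  rw [F.le_circR_iff h]
  intro s hs hF
  have h1 := F.circR_le h x hs hF
  have h2 := F.circR_le h y hs hF
  simp only [smul_eq_mul]
  have h3 : a * F.circR x ≤ a * (x * s + (F.F s).toReal) := by gcongr
  have h4 : b * F.circR y ≤ b * (y * s + (F.F s).toReal) := by gcongr
  have h5 : (F.F s).toReal = a * (F.F s).toReal + b * (F.F s).toReal := by rw [← add_mul, hab, one_mul]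
  rw [h5]
  linarith

lemma circR_continuous (F : EntropyFn) (h : F.Superlinear) : Continuous F.circR := by
  rw [← continuousOn_univ]
  exact (F.circR_concave h).continuousOn isOpen_univ

lemma interior_circDom (F : EntropyFn) (h : F.Superlinear) : interior F.circDom = univ := by
  have : F.circDom = univ := by
    ext φ
    simp only [circDom, mem_univ, iff_true]
    change F.circ φ ≠ ⊥
    rw [← F.coe_circR h]
    exact EReal.coe_ne_bot _
  rw [this, interior_univ]

/-- biconjugation -/
lemma biconj (F : EntropyFn) (h : F.Superlinear) {s t : ℝ} (hs : 0 ≤ s)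
    (ht : ENNReal.ofReal t < F.F s) : ∃ φ : ℝ, t < F.circR φ - φ * s := by
  set A : Set (ℝ × ℝ) := {q | 0 ≤ q.1 ∧ F.F q.1 ≠ ∞ ∧ (F.F q.1).toReal ≤ q.2} with hA
  have g1 : Convex ℝ A := by
    rintro ⟨a, u⟩ ⟨ha, hFa, hu⟩ ⟨b, v⟩ ⟨hb, hFb, hv⟩ p q hp hq hpq
    have hq' : q = 1 - p := by linarith
    subst hq'
    obtain ⟨c1, c2⟩ := F.convexR ha hb hp (by linarith) hFa hFb
    refine ⟨?_, by simpa using c1, ?_⟩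
    · simp only [Prod.fst_add, Prod.smul_fst, smul_eq_mul]
      dsimp only at ha hb
      positivity
    · simp only [Prod.fst_add, Prod.smul_fst, smul_eq_mul, Prod.snd_add, Prod.smul_snd]
      dsimp only at hu hv
      refine c2.trans ?_
      gcongr
  have g2 : ∀ y t t', (y, t) ∈ A → t ≤ t' → (y, t') ∈ A := by
    rintro y t t' ⟨ha, hFa, hu⟩ htt
    exact ⟨ha, hFa, hu.trans htt⟩
  have g3 : ∀ y t, (y, t) ∈ A → 0 ≤ t := by
    rintro y t ⟨ha, hFa, hu⟩
    exact ENNReal.toReal_nonneg.trans hu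
  have g4 : (s, t) ∉ closure A := by
    -- not in closure
    obtain ⟨t', ht1, ht2⟩ := exists_between ht
    have hev := F.lsc s hs t' ht2
    rw [eventually_nhdsWithin_iff] at hev
    rw [mem_closure_iff_nhds]
    push Not
    have hev2 : ∀ᶠ u in 𝓝 t, ENNReal.ofReal u < t' :=
      (ENNReal.continuous_ofReal.tendsto t).eventually (gt_mem_nhds ht1)
    refine ⟨_, prod_mem_nhds hev hev2, ?_⟩
    rw [Set.eq_empty_iff_forall_notMem]
    rintro ⟨a, u⟩ ⟨⟨q1, q2⟩, ⟨ha, hFa, hu⟩⟩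
    have e1 : t' < F.F a := q1 ha
    have e2 : ENNReal.ofReal u < t' := q2
    have e3 : F.F a ≤ ENNReal.ofReal u := by
      rw [← ENNReal.ofReal_toReal hFa]
      exact ENNReal.ofReal_le_ofReal hu
    exact absurd (e1.trans_le e3) (not_lt.2 e2.le)
  obtain ⟨l, c, h1, h2⟩ := sep_lemma A g1 g2 0 g3 s t g4
  have hl : ∀ y, l y = y * l 1 := fun y => by
    rw [← smul_eq_mul, ← map_smul]; simp
  refine ⟨-(l 1), ?_⟩
  have : c ≤ F.circR (-(l 1)) := by
    rw [F.le_circR_iff h]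
    intro r hr hF
    have := h1 r (F.F r).toReal ⟨hr, hF, le_rfl⟩
    rw [hl] at this
    linarith
  rw [hl] at h2
  linarith

lemma revConj_le_iff (F : EntropyFn) (h : F.Superlinear) (ψ φ : ℝ)
    (hψ : (ψ : EReal) ≤ (F.F 0 : EReal)) :
    F.revConj ψ ≤ (φ : EReal) ↔ ψ ≤ F.circR φ := by
  rw [F.le_circR_iff h]
  unfold revConj
  rw [iSup_le_iff]
  constructor
  · intro hh s hs hF
    rcases hs.eq_or_lt with rfl | hpos
    · rw [← EReal.coe_ennreal_toReal hF] at hψ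
      have : ψ ≤ (F.F 0).toReal := by exact_mod_cast hψ
      simpa using this
    · have := hh ⟨s⁻¹, inv_nonneg.2 hs⟩
      simp only [revF, inv_pos, hpos, if_true, one_div, inv_inv] at this
      rw [← EReal.coe_ennreal_toReal (ENNReal.mul_ne_top ENNReal.ofReal_ne_top hF),
        ENNReal.toReal_mul, ENNReal.toReal_ofReal (inv_nonneg.2 hs)] at this
      have h2 : s⁻¹ * ψ - s⁻¹ * (F.F s).toReal ≤ φ := by exact_mod_cast this
      have h3 : s * (s⁻¹ * ψ - s⁻¹ * (F.F s).toReal) ≤ s * φ := by gcongr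
      rw [← mul_sub, mul_inv_cancel_left₀ hpos.ne'] at h3
      linarith
  · rintro hh ⟨s, hs⟩
    have hs : 0 ≤ s := hs
    have hrec : F.recC = ∞ := h
    rcases hs.eq_or_lt with rfl | hpos
    · simp [revF, hrec]
    · simp only [revF, hpos, if_true]
      by_cases hF : F.F (1 / s) = ∞
      · rw [hF, ENNReal.mul_top (by simpa using hpos)]
        simp
      · rw [← EReal.coe_ennreal_toReal (ENNReal.mul_ne_top ENNReal.ofReal_ne_top hF),
          ENNReal.toReal_mul, ENNReal.toReal_ofReal hs]
        have h2 := hh (1 / s) (by positivity) hF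
        have h3 : s * ψ ≤ s * (φ * (1 / s) + (F.F (1 / s)).toReal) := by gcongr
        have h4 : s * (φ * (1 / s)) = φ := by field_simp
        have : s * ψ - s * (F.F (1 / s)).toReal ≤ φ := by rw [mul_add, h4] at h3; linarith
        exact_mod_cast this

lemma exists_circR_gt (F : EntropyFn) (h : F.Superlinear) (b : ℝ)
    (hb : (b : EReal) < (F.F 0 : EReal)) : ∃ φ : ℝ, b < F.circR φ := by
  rcases lt_or_ge b 0 with hneg | hpos
  · exact ⟨0, hneg.trans_le (F.circR_zero_nonneg h)⟩
  · have : ENNReal.ofReal b < F.F 0 := by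
      rw [← EReal.coe_ennreal_lt_coe_ennreal_iff, EReal.coe_ennreal_ofReal, max_eq_left hpos]
      exact hb
    obtain ⟨φ, hφ⟩ := F.biconj h le_rfl this
    exact ⟨φ, by simpa using hφ⟩

lemma revConj_mono (F : EntropyFn) : Monotone F.revConj := by
  intro a b hab
  unfold revConj
  refine iSup_mono fun s => ?_
  have : (s:ℝ) * a ≤ s * b := mul_le_mul_of_nonneg_left hab s.2
  exact EReal.sub_le_sub (by exact_mod_cast this) le_rfl

lemma coe_revConjR (F : EntropyFn) (h : F.Superlinear) {ψ : ℝ}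
    (hψ : (ψ : EReal) < (F.F 0 : EReal)) : ((F.revConj ψ).toReal : EReal) = F.revConj ψ := by
  refine EReal.coe_toReal ?_ ?_
  · obtain ⟨φ, hφ⟩ := F.exists_circR_gt h ψ hψ
    exact ne_top_of_le_ne_top (EReal.coe_ne_top _) ((F.revConj_le_iff h ψ φ hψ.le).2 hφ.le)
  · obtain ⟨s0, hs0, hF0⟩ := F.dom
    have h1 := le_iSup (fun s : Ici (0:ℝ) => (((s : ℝ) * ψ : ℝ) : EReal) - ((F.revF (s : ℝ) : ℝ≥0∞) : EReal))
      ⟨s0⁻¹, inv_nonneg.2 hs0.le⟩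
    refine ne_bot_of_le_ne_bot ?_ h1
    simp only [revF, inv_pos, hs0, if_true, one_div, inv_inv]
    rw [← EReal.coe_ennreal_toReal (ENNReal.mul_ne_top ENNReal.ofReal_ne_top hF0)]
    exact_mod_cast EReal.coe_ne_bot _

lemma revConjR_continuousOn (F : EntropyFn) (h : F.Superlinear) :
    ContinuousOn (fun ψ : ℝ => (F.revConj ψ).toReal) {ψ : ℝ | (ψ : EReal) < (F.F 0 : EReal)} := by
  have hconv : Convex ℝ {ψ : ℝ | (ψ : EReal) < (F.F 0 : EReal)} := by
    rw [convex_iff_ordConnected]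
    refine ⟨fun x _ y hy z hz => ?_⟩
    exact lt_of_le_of_lt (EReal.coe_le_coe_iff.2 hz.2) hy
  have hopen : IsOpen {ψ : ℝ | (ψ : EReal) < (F.F 0 : EReal)} :=
    isOpen_Iio.preimage continuous_coe_real_ereal
  refine ConvexOn.continuousOn hopen ?_
  refine ⟨hconv, fun x hx y hy a b ha hb hab => ?_⟩
  have hz := hconv hx hy ha hb hab
  have key : ∀ ψ : ℝ, (ψ : EReal) < (F.F 0 : EReal) → ψ ≤ F.circR (F.revConj ψ).toReal := by
    intro ψ hψ
    rw [← F.revConj_le_iff h ψ _ hψ.le, F.coe_revConjR h hψ]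
  rw [← EReal.coe_le_coe_iff, F.coe_revConjR h hz, F.revConj_le_iff h _ _ (le_of_lt hz)]
  have h1 := (F.circR_concave h).2 (mem_univ (F.revConj x).toReal) (mem_univ (F.revConj y).toReal) ha hb hab
  refine le_trans ?_ h1
  simp only [smul_eq_mul]
  have := key x hx
  have := key y hy
  gcongr

end EntropyFn
end

noncomputable section
open MeasureTheory Filter Set Topology TopologicalSpace
open scoped ENNReal NNReal BoundedContinuousFunction
set_option linter.unusedSectionVars false
set_option linter.style.haveILetI false

section
variable {X K : Type*} [TopologicalSpace X] [MetrizableSpace X] [SecondCountableTopology X]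
  [MeasurableSpace X] [BorelSpace X]
  [TopologicalSpace K] [MetrizableSpace K] [SecondCountableTopology K]
  [MeasurableSpace K] [BorelSpace K]

def pmap (i : X → K) (hi : Measurable i) (p : ProbabilityMeasure X) : ProbabilityMeasure K :=
  p.map hi.aemeasurable

lemma coe_pmap (i : X → K) (hi : Measurable i) (p : ProbabilityMeasure X) :
    (pmap i hi p : Measure K) = (p : Measure X).map i := rfl

lemma pmap_isEmbedding (i : X → K) (hi : IsEmbedding i) :
    IsEmbedding (pmap i hi.continuous.measurable) := by
  have hinj : Function.Injective (pmap i hi.continuous.measurable) := by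
    intro p q hpq
    apply Subtype.ext
    have h : (p : Measure X).map i = (q : Measure X).map i := congrArg Subtype.val hpq
    haveI : IsFiniteMeasure p.1 := by haveI := p.2; infer_instance
    refine ext_of_generate_finite {s | IsOpen s} BorelSpace.measurable_eq isPiSystem_isOpen ?_ ?_
    · intro s hs
      obtain ⟨V, hV, rfl⟩ := hi.isInducing.isOpen_iff.1 hs
      have := congrArg (fun m => m V) h
      simpa [Measure.map_apply hi.continuous.measurable hV.measurableSet] using this
    · have h1 := p.2.measure_univ
      have h2 := q.2.measure_univ
      exact h1.trans h2.symm
  refine ⟨isInducing_iff_nhds.2 fun p => le_antisymm ?_ ?_, hinj⟩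
  · have : Continuous (pmap i hi.continuous.measurable) := ProbabilityMeasure.continuous_map hi.continuous
    exact this.tendsto p |>.le_comap
  · change Tendsto id (comap (pmap i hi.continuous.measurable) (𝓝 (pmap i hi.continuous.measurable p))) (𝓝 p)
    apply tendsto_of_forall_isOpen_le_liminf'
    intro G hG
    obtain ⟨V, hV, rfl⟩ := hi.isInducing.isOpen_iff.1 hG
    have := ProbabilityMeasure.le_liminf_measure_open_of_tendsto
      (tendsto_comap (f := pmap i hi.continuous.measurable) (x := 𝓝 (pmap i hi.continuous.measurable p))) hV
    simpa [coe_pmap, Measure.map_apply hi.continuous.measurable hV.measurableSet] using this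

lemma PM_inducing : IsInducing (fun p : ProbabilityMeasure X => fun f : X →ᵇ ℝ => ∫ x, f x ∂(p : Measure X)) := by
  refine isInducing_iff_nhds.2 fun p => le_antisymm ?_ ?_
  · have : Tendsto (fun p : ProbabilityMeasure X => fun f : X →ᵇ ℝ => ∫ x, f x ∂(p : Measure X)) (𝓝 p)
        (𝓝 (fun f : X →ᵇ ℝ => ∫ x, f x ∂(p : Measure X))) :=
      tendsto_pi_nhds.2 fun f => ProbabilityMeasure.tendsto_iff_forall_integral_tendsto.1 tendsto_id f
    exact this.le_comap
  · rw [← tendsto_id']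
    rw [ProbabilityMeasure.tendsto_iff_forall_integral_tendsto]
    intro f
    exact ((continuous_apply (A := fun _ : X →ᵇ ℝ => ℝ) f).tendsto _).comp tendsto_comap

theorem borel_PM [SecondCountableTopology (ProbabilityMeasure X)] :
    BorelSpace (ProbabilityMeasure X) := by
  constructor
  apply le_antisymm
  · have h : @Measurable _ _ (borel (ProbabilityMeasure X)) _ (fun p : ProbabilityMeasure X => (p : Measure X)) := by
      letI : MeasurableSpace (ProbabilityMeasure X) := borel _
      haveI : BorelSpace (ProbabilityMeasure X) := ⟨rfl⟩
      refine Measurable.measure_of_isPiSystem_of_isProbabilityMeasure (S := {s | IsOpen s})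
        BorelSpace.measurable_eq isPiSystem_isOpen ?_
      intro s hs
      have : LowerSemicontinuous fun p : ProbabilityMeasure X => (p : Measure X) s := by
        intro p
        refine lowerSemicontinuousAt_iff_le_liminf.2 ?_
        exact ProbabilityMeasure.le_liminf_measure_open_of_tendsto tendsto_id hs
      exact this.measurable
    exact h.comap_le
  · have ht : (inferInstance : TopologicalSpace (ProbabilityMeasure X)) =
        generateFrom {s | ∃ (f : X →ᵇ ℝ) (U : Set ℝ), IsOpen U ∧ s = (fun p : ProbabilityMeasure X => ∫ x, f x ∂(p : Measure X)) ⁻¹' U} := by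
      apply le_antisymm
      · apply le_generateFrom
        rintro s ⟨f, U, hU, rfl⟩
        exact hU.preimage ((continuous_apply f).comp PM_inducing.continuous)
      · conv_rhs => rw [show (inferInstance : TopologicalSpace (ProbabilityMeasure X)) = _ from PM_inducing.eq_induced]
        rw [← continuous_iff_le_induced]
        refine @continuous_pi _ _ _ (generateFrom _) _ _ fun f => ?_
        refine continuous_def.2 fun U hU => ?_
        exact isOpen_generateFrom_of_mem ⟨f, U, hU, rfl⟩
    rw [borel_eq_generateFrom_of_subbasis ht]
    apply MeasurableSpace.generateFrom_le
    rintro s ⟨f, U, hU, rfl⟩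
    have : Measurable (fun p : ProbabilityMeasure X => ∫ x, f x ∂(p : Measure X)) := by
      have h1 : ∀ g : X → ℝ, Measurable g → Measurable (fun p : ProbabilityMeasure X => (∫⁻ x, ENNReal.ofReal (g x) ∂(p : Measure X)).toReal) := by
        intro g hg
        exact ((Measure.measurable_lintegral hg.ennreal_ofReal).comp measurable_subtype_coe).ennreal_toReal
      have h2 := (h1 f f.continuous.measurable).sub (h1 (fun x => - f x) f.continuous.measurable.neg)
      convert h2 using 2 with p
      exact integral_eq_lintegral_pos_part_sub_lintegral_neg_part (f.integrable _)
    exact this hU.measurableSet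
end

section
variable {X K : Type*} [TopologicalSpace X] [MetrizableSpace X] [SecondCountableTopology X]
  [MeasurableSpace X] [BorelSpace X]
  [TopologicalSpace K] [MetrizableSpace K] [CompactSpace K]
  [MeasurableSpace K] [BorelSpace K]

instance PMK_metr : MetrizableSpace (ProbabilityMeasure K) := by
  haveI : SecondCountableTopology K := by
    letI := metrizableSpaceMetric K
    infer_instance
  infer_instance

instance PMK_sc : SecondCountableTopology (ProbabilityMeasure K) := by
  haveI : SecondCountableTopology K := by
    letI := metrizableSpaceMetric K
    infer_instance
  letI := metrizableSpaceMetric (ProbabilityMeasure K)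
  infer_instance

instance PMK_borel : BorelSpace (ProbabilityMeasure K) := by
  haveI : SecondCountableTopology K := by
    letI := metrizableSpaceMetric K
    infer_instance
  exact borel_PM

end

lemma sb_of_equiv {α β : Type*} [MeasurableSpace α] [MeasurableSpace β] [StandardBorelSpace β]
    (e : α ≃ᵐ β) : StandardBorelSpace α := by
  letI := upgradeStandardBorel β
  let t' : TopologicalSpace α := induced e inferInstance
  refine ⟨t', ?_, ?_⟩
  · constructor
    have h1 : MeasurableSpace.comap e (borel β) = borel α := borel_comap.symm
    rw [← h1, ← BorelSpace.measurable_eq (α := β)]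
    exact e.measurableEmbedding.comap_eq.symm
  · let h : α ≃ₜ β :=
      Equiv.toHomeomorphOfIsInducing e.toEquiv (IsInducing.mk rfl)
    exact h.isClosedEmbedding.polishSpace

abbrev HK := ℕ → unitInterval

lemma exists_emb (X : Type*) [TopologicalSpace X] [MetrizableSpace X] [SecondCountableTopology X] :
    ∃ i : X → HK, IsEmbedding i := by
  letI := metrizableSpaceMetric X
  obtain ⟨f, hf⟩ := Metric.PiNatEmbed.exists_embedding_to_hilbert_cube (X := X)
  exact ⟨f, hf⟩

section
variable {X : Type*} [TopologicalSpace X] [MetrizableSpace X] [SecondCountableTopology X]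
  [MeasurableSpace X] [BorelSpace X]

instance PMX_sc : SecondCountableTopology (ProbabilityMeasure X) := by
  obtain ⟨i, hi⟩ := exists_emb X
  exact (pmap_isEmbedding i hi).secondCountableTopology

instance PMX_borel : BorelSpace (ProbabilityMeasure X) := borel_PM

end

section
variable {X : Type*} [TopologicalSpace X] [PolishSpace X]
  [MeasurableSpace X] [BorelSpace X]

lemma emb_meas {i : X → HK} (hi : IsEmbedding i) : MeasurableEmbedding i :=
  hi.continuous.measurableEmbedding hi.injective

lemma range_pmap {i : X → HK} (hi : IsEmbedding i) :
    range (pmap i hi.continuous.measurable) = {p : ProbabilityMeasure HK | (p : Measure HK) (range i)ᶜ = 0} := by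
  have hm := emb_meas hi
  ext p
  constructor
  · rintro ⟨q, rfl⟩
    change (q : Measure X).map i _ = 0
    rw [hm.map_apply]
    simp
  · intro hp
    have hmap : ((p : Measure HK).comap i).map i = p := by
      rw [hm.map_comap]
      apply Measure.restrict_eq_self_of_ae_mem
      exact hp
    have h1 : IsProbabilityMeasure ((p : Measure HK).comap i) := by
      constructor
      have := congrArg (fun m => m univ) hmap
      simp only [hm.map_apply] at this
      simpa using this
    exact ⟨⟨_, h1⟩, Subtype.ext hmap⟩

lemma pmap_measEmb {i : X → HK} (hi : IsEmbedding i) :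
    MeasurableEmbedding (pmap i hi.continuous.measurable) := by
  apply (pmap_isEmbedding i hi).measurableEmbedding
  rw [range_pmap hi]
  have : Measurable fun p : ProbabilityMeasure HK => (p : Measure HK) (range i)ᶜ :=
    (Measure.measurable_coe (emb_meas hi).measurableSet_range.compl).comp measurable_subtype_coe
  exact this (measurableSet_singleton 0)

instance PMX_sb : StandardBorelSpace (ProbabilityMeasure X) := by
  obtain ⟨i, hi⟩ := exists_emb X
  haveI : PolishSpace (ProbabilityMeasure HK) := by
    letI := metrizableSpaceMetric (ProbabilityMeasure HK)
    infer_instance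
  have hm := pmap_measEmb hi
  haveI : StandardBorelSpace (range (pmap i hi.continuous.measurable)) := hm.measurableSet_range.standardBorel
  exact sb_of_equiv hm.equivRange
end
end

noncomputable section
open MeasureTheory Filter Set Topology TopologicalSpace
open scoped ENNReal NNReal BoundedContinuousFunction

lemma ofReal_integral_le' {α : Type*} [MeasurableSpace α] {μ : Measure α} (f : α → ℝ) :
    ENNReal.ofReal (∫ x, f x ∂μ) ≤ ∫⁻ x, ENNReal.ofReal (f x) ∂μ := by
  by_cases hf : Integrable f μ
  · rw [integral_eq_lintegral_pos_part_sub_lintegral_neg_part hf]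
    apply ENNReal.ofReal_le_of_le_toReal
    have : 0 ≤ (∫⁻ x, ENNReal.ofReal (-f x) ∂μ).toReal := ENNReal.toReal_nonneg
    linarith
  · simp [integral_undef hf]

lemma integral_bind' {α β : Type*} [MeasurableSpace α] [MeasurableSpace β] (Q : Measure α)
    (η : ProbabilityTheory.Kernel α β) (f : β → ℝ)
    (hf : Integrable f (Q.bind η)) : ∫ x, f x ∂(Q.bind η) = ∫ a, ∫ x, f x ∂(η a) ∂Q := by
  have h := ProbabilityTheory.Kernel.integral_comp (η := η)
    (κ := ProbabilityTheory.Kernel.const Unit Q) (a := ()) (f := f)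
  rw [ProbabilityTheory.Kernel.comp_apply, ProbabilityTheory.Kernel.const_apply] at h
  exact h hf

lemma integrable_bind_int {α β : Type*} [MeasurableSpace α] [MeasurableSpace β] (Q : Measure α)
    (η : ProbabilityTheory.Kernel α β) (f : β → ℝ)
    (hf : Integrable f (Q.bind η)) : Integrable (fun a => ∫ x, f x ∂(η a)) Q := by
  have h := Integrable.integral_comp (η := η)
    (κ := ProbabilityTheory.Kernel.const Unit Q) (a := ()) (f := f)
  rw [ProbabilityTheory.Kernel.comp_apply, ProbabilityTheory.Kernel.const_apply] at h
  exact h hf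

def idK (X : Type*) [MeasurableSpace X] : ProbabilityTheory.Kernel (ProbabilityMeasure X) X :=
  ⟨fun p => (p : Measure X), measurable_subtype_coe⟩

instance {X : Type*} [MeasurableSpace X] : ProbabilityTheory.IsMarkovKernel (idK X) :=
  ⟨fun p => p.2⟩

lemma idK_apply {X : Type*} [MeasurableSpace X] (p : ProbabilityMeasure X) : idK X p = (p : Measure X) := rfl

section
variable {X : Type*} [TopologicalSpace X] [MetrizableSpace X] [SecondCountableTopology X]
  [MeasurableSpace X] [BorelSpace X]

def PMConvex (g : ProbabilityMeasure X → ℝ≥0∞) : Prop :=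
  ∀ (p q m : ProbabilityMeasure X) (t : ℝ), 0 ≤ t → t ≤ 1 →
      (m : Measure X) = ENNReal.ofReal t • (p : Measure X)
          + ENNReal.ofReal (1 - t) • (q : Measure X) →
      g m ≤ ENNReal.ofReal t * g p + ENNReal.ofReal (1 - t) * g q

lemma affine_minorant (g : ProbabilityMeasure X → ℝ≥0∞) (hg : LowerSemicontinuous g)
    (hc : PMConvex g) (m : ProbabilityMeasure X) (t : ℝ≥0) (ht : (t : ℝ≥0∞) < g m) :
    ∃ (h : X →ᵇ ℝ) (c : ℝ), (∀ p : ProbabilityMeasure X, ENNReal.ofReal (∫ x, h x ∂(p : Measure X) + c) ≤ g p) ∧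
      (t : ℝ) < ∫ x, h x ∂(m : Measure X) + c := by
  obtain ⟨t', ht1, ht2⟩ := ENNReal.lt_iff_exists_nnreal_btwn.1 ht
  have hopen : IsOpen {p | (t' : ℝ≥0∞) < g p} := hg.isOpen_preimage _
  obtain ⟨V, hV, hVe⟩ := PM_inducing.isOpen_iff.1 hopen
  have hmV : (fun f : X →ᵇ ℝ => ∫ x, f x ∂(m : Measure X)) ∈ V := by
    have : m ∈ {p | (t' : ℝ≥0∞) < g p} := ht2
    rw [← hVe] at this
    exact this
  obtain ⟨I, u, hu, huV⟩ := isOpen_pi_iff.1 hV _ hmV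
  let T : ProbabilityMeasure X → (I → ℝ) := fun p f => ∫ x, f.1 x ∂(p : Measure X)
  let A : Set ((I → ℝ) × ℝ) := {z | ∃ p, z.1 = T p ∧ g p ≤ ENNReal.ofReal z.2 ∧ 0 ≤ z.2}
  have hA : Convex ℝ A := by
    rintro ⟨y1, r1⟩ ⟨p, hp1, hp2, hp3⟩ ⟨y2, r2⟩ ⟨q, hq1, hq2, hq3⟩ a b ha hb hab
    simp only at hp1 hp2 hp3 hq1 hq2 hq3
    have hb' : b = 1 - a := by linarith
    have hprob : IsProbabilityMeasure (ENNReal.ofReal a • (p : Measure X) + ENNReal.ofReal (1 - a) • (q : Measure X)) := by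
      constructor
      simp only [Measure.coe_add, Measure.coe_smul, Pi.add_apply, Pi.smul_apply, measure_univ, smul_eq_mul, mul_one]
      rw [← ENNReal.ofReal_add ha (by linarith)]
      simp
    refine ⟨⟨_, hprob⟩, ?_, ?_, ?_⟩
    · ext f
      change a * y1 f + b * y2 f = ∫ x, f.1 x ∂(ENNReal.ofReal a • (p : Measure X) + ENNReal.ofReal (1 - a) • (q : Measure X))
      have i1 : Integrable f.1 (p : Measure X) := f.1.integrable _
      have i2 : Integrable f.1 (q : Measure X) := f.1.integrable _
      rw [integral_add_measure (i1.smul_measure ENNReal.ofReal_ne_top) (i2.smul_measure ENNReal.ofReal_ne_top),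
        integral_smul_measure, integral_smul_measure, ENNReal.toReal_ofReal ha, ENNReal.toReal_ofReal (by linarith), hp1, hq1, hb']
      rfl
    · refine (hc p q ⟨_, hprob⟩ a ha (by linarith) rfl).trans ?_
      change _ ≤ ENNReal.ofReal (a * r1 + b * r2)
      rw [ENNReal.ofReal_add (by positivity) (by positivity), ENNReal.ofReal_mul ha, ENNReal.ofReal_mul hb, ← hb']
      gcongr
    · change 0 ≤ a * r1 + b * r2
      positivity
  have hup : ∀ y t t', (y, t) ∈ A → t ≤ t' → (y, t') ∈ A := by
    rintro y t t' ⟨p, h1, h2, h3⟩ h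
    exact ⟨p, h1, h2.trans (ENNReal.ofReal_le_ofReal h), h3.trans h⟩
  have hlow : ∀ y t, (y, t) ∈ A → 0 ≤ t := by
    rintro y t ⟨p, h1, h2, h3⟩
    exact h3
  have hcl : (T m, (t : ℝ)) ∉ closure A := by
    intro hx
    have hO : IsOpen ((univ.pi fun f : I => u f.1) ×ˢ Iio (t' : ℝ)) :=
      (isOpen_set_pi finite_univ fun f _ => (hu f.1 f.2).1).prod isOpen_Iio
    obtain ⟨⟨y, r⟩, ⟨hy, hr⟩, p, h1, h2, h3⟩ := mem_closure_iff.1 hx _ hO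
      ⟨fun f _ => (hu f.1 f.2).2, by simpa using ht1⟩
    simp only at h1 h2 h3 hy hr
    have hp : p ∈ {p | (t' : ℝ≥0∞) < g p} := by
      rw [← hVe]
      apply huV
      intro f hf
      have := hy ⟨f, hf⟩ trivial
      rw [h1] at this
      exact this
    have h4 : (t' : ℝ≥0∞) < ENNReal.ofReal r := lt_of_lt_of_le hp h2
    have h5 : ENNReal.ofReal r ≤ t' := by
      rw [← ENNReal.ofReal_coe_nnreal]
      exact ENNReal.ofReal_le_ofReal (le_of_lt hr)
    exact absurd h4 (not_lt.2 h5)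
  obtain ⟨l, c, h1, h2⟩ := sep_lemma A hA hup 0 hlow _ _ hcl
  classical
  let h : X →ᵇ ℝ := ∑ f : I, (l (Pi.single f 1)) • f.1
  have hint : ∀ p : ProbabilityMeasure X, ∫ x, h x ∂(p : Measure X) = l (T p) := by
    intro p
    have e1 : l (T p) = ∑ f : I, T p f * l (Pi.single f 1) := by
      conv_lhs => rw [← Finset.univ_sum_single (T p)]
      rw [map_sum]
      refine Finset.sum_congr rfl fun f _ => ?_
      have : (Pi.single f (T p f) : I → ℝ) = (T p f) • Pi.single f 1 := by
        rw [← Pi.single_smul]; simp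
      rw [this, map_smul, smul_eq_mul]
    have e2 : ∀ x, h x = ∑ f : I, l (Pi.single f 1) * f.1 x := by
      intro x
      simp [h]
    simp_rw [e2]
    rw [integral_finsetSum _ fun f _ => (f.1.integrable _).const_mul _, e1]
    refine Finset.sum_congr rfl fun f _ => ?_
    rw [integral_const_mul, mul_comm]
  refine ⟨h, c, fun p => ?_, by rw [hint]; exact h2⟩
  rw [hint]
  by_cases hp : g p = ∞
  · rw [hp]; exact le_top
  · have := h1 (T p) (g p).toReal ⟨p, rfl, by simp [ENNReal.ofReal_toReal hp], ENNReal.toReal_nonneg⟩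
    exact ENNReal.ofReal_le_of_le_toReal this

theorem pm_jensen (g : ProbabilityMeasure X → ℝ≥0∞) (hg : LowerSemicontinuous g)
    (hc : PMConvex g) (Q : Measure (ProbabilityMeasure X)) [IsProbabilityMeasure Q]
    (m : ProbabilityMeasure X) (hm : (m : Measure X) = Q.bind (idK X)) :
    g m ≤ ∫⁻ p, g p ∂Q := by
  apply le_of_forall_lt
  intro s hs
  obtain ⟨t, ht1, ht2⟩ := ENNReal.lt_iff_exists_nnreal_btwn.1 hs
  refine ht1.trans_le ?_
  obtain ⟨h, c, h1, h2⟩ := affine_minorant g hg hc m t ht2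
  have hint : Integrable h (Q.bind (idK X)) := by
    rw [← hm]; exact h.integrable _
  have e1 := integral_bind' Q (idK X) h hint
  have e2 := integrable_bind_int Q (idK X) h hint
  rw [hm, e1] at h2
  have e3 : ∫ a, ∫ x, h x ∂(idK X a) ∂Q + c = ∫ a, (∫ x, h x ∂(idK X a) + c) ∂Q := by
    rw [integral_add e2 (integrable_const _)]; simp
  rw [e3] at h2
  calc (t : ℝ≥0∞) = ENNReal.ofReal t := by simp
    _ ≤ ENNReal.ofReal (∫ a, (∫ x, h x ∂(idK X a) + c) ∂Q) := ENNReal.ofReal_le_ofReal h2.le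
    _ ≤ ∫⁻ a, ENNReal.ofReal (∫ x, h x ∂(idK X a) + c) ∂Q := ofReal_integral_le' _
    _ ≤ _ := lintegral_mono fun p => h1 p
end
end

noncomputable section
open MeasureTheory Filter Set Topology TopologicalSpace
open scoped ENNReal NNReal BoundedContinuousFunction
set_option linter.unusedSectionVars false
set_option linter.style.haveILetI false

namespace EntropyFn

lemma circR_lip (F : EntropyFn) (h : F.Superlinear) (M : ℝ) :
    ∃ L : ℝ≥0, LipschitzOnWith L F.circR (Icc (-M) M) := by
  have h1 : LocallyLipschitz F.circR := (F.circR_concave h).locallyLipschitz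
  exact (h1.locallyLipschitzOn (s := Icc (-M) M)).exists_lipschitzOnWith_of_compact isCompact_Icc

section
variable {X : Type*} [TopologicalSpace X] [MetrizableSpace X]
  [MeasurableSpace X] [BorelSpace X]

lemma ent_ext (F : EntropyFn) (h : F.Superlinear) (μ ν : Measure X) [IsFiniteMeasure μ] [IsFiniteMeasure ν]
    (B : ℝ) (hB : ∀ φ : X →ᵇ ℝ, ∫ x, F.circR (φ x) ∂μ - ∫ x, φ x ∂ν ≤ B)
    (φ : X → ℝ) (hφ : Measurable φ) (M : ℝ) (hM : ∀ x, |φ x| ≤ M) :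
    ∫ x, F.circR (φ x) ∂μ - ∫ x, φ x ∂ν ≤ B := by
  letI := metrizableSpaceMetric X
  obtain ⟨L, hL⟩ := F.circR_lip h M
  rcases isEmpty_or_nonempty X with hX | ⟨⟨x0⟩⟩
  · have := hB 0
    simpa [Measure.eq_zero_of_isEmpty] using this
  have hM0 : 0 ≤ M := (abs_nonneg _).trans (hM x0)
  have hcm : Measurable F.circR := (F.circR_continuous h).measurable
  have key : ∀ ε > 0, ∫ x, F.circR (φ x) ∂μ - ∫ x, φ x ∂ν ≤ B + (L + 1) * ε := by
    intro ε hε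
    have hint : ∀ (ρ : Measure X) [IsFiniteMeasure ρ], Integrable φ ρ := fun ρ _ =>
      Integrable.of_bound hφ.aestronglyMeasurable M (ae_of_all _ fun x => by simpa using hM x)
    obtain ⟨g, hg, hgi⟩ := (hint (μ + ν)).exists_boundedContinuous_integral_sub_le hε
    let c : X →ᵇ ℝ := BoundedContinuousFunction.ofNormedAddCommGroup
      (fun x => max (-M) (min M (g x))) (by fun_prop) M (fun x => by
        rw [Real.norm_eq_abs, abs_le]
        exact ⟨le_max_left _ _, max_le (by linarith) (min_le_left _ _)⟩)
    have hcx : ∀ x, c x ∈ Icc (-M) M := fun x => ⟨le_max_left _ _, max_le (by linarith) (min_le_left _ _)⟩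
    have hφx : ∀ x, φ x ∈ Icc (-M) M := fun x => abs_le.1 (hM x)
    have hcd : ∀ x, |φ x - c x| ≤ ‖φ x - g x‖ := by
      intro x
      have e1 : c x = max (-M) (min M (g x)) := rfl
      have e2 := hφx x
      rw [e1, Real.norm_eq_abs]
      rcases max_cases (-M) (min M (g x)) with h1 | h1 <;> rcases min_cases M (g x) with h2 | h2 <;>
        rw [abs_le] <;> rcases abs_cases (φ x - g x) with h3 | h3 <;> constructor <;> simp only [mem_Icc] at e2 <;> linarith
    have hni : ∀ (ρ : Measure X), Integrable g ρ → IsFiniteMeasure ρ → Integrable (fun x => ‖φ x - g x‖) ρ := fun ρ h1 h2 =>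
      ((hint ρ).sub h1).norm
    have hgμ : Integrable g μ := g.integrable _
    have hgν : Integrable g ν := g.integrable _
    rw [integral_add_measure (hni μ hgμ inferInstance) (hni ν hgν inferInstance)] at hg
    have n1 : 0 ≤ ∫ x, ‖φ x - g x‖ ∂μ := integral_nonneg fun _ => norm_nonneg _
    have n2 : 0 ≤ ∫ x, ‖φ x - g x‖ ∂ν := integral_nonneg fun _ => norm_nonneg _
    have ci : ∀ f : X → ℝ, Measurable f → (∀ x, f x ∈ Icc (-M) M) → Integrable (fun x => F.circR (f x)) μ := by
      intro f hf hfM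
      refine Integrable.of_bound (hcm.comp hf).aestronglyMeasurable (max (F.circR M) (-F.circR (-M))) (ae_of_all _ fun x => ?_)
      rw [Real.norm_eq_abs, abs_le']
      exact ⟨(F.circR_mono h (hfM x).2).trans (le_max_left _ _),
        (neg_le_neg (F.circR_mono h (hfM x).1)).trans (le_max_right _ _)⟩
    have i1 := ci φ hφ hφx
    have i2 := ci c c.continuous.measurable hcx
    have a1 : ∫ x, F.circR (φ x) ∂μ - ∫ x, F.circR (c x) ∂μ ≤ L * ∫ x, ‖φ x - g x‖ ∂μ := by
      rw [← integral_sub i1 i2, ← integral_const_mul]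
      refine integral_mono (i1.sub i2) ((hni μ hgμ inferInstance).const_mul _) fun x => ?_
      have := hL.dist_le_mul _ (hφx x) _ (hcx x)
      rw [Real.dist_eq, Real.dist_eq] at this
      exact (le_abs_self _).trans (this.trans (mul_le_mul_of_nonneg_left (hcd x) L.2))
    have a2 : ∫ x, c x ∂ν - ∫ x, φ x ∂ν ≤ ∫ x, ‖φ x - g x‖ ∂ν := by
      rw [← integral_sub (c.integrable _) (hint ν)]
      refine integral_mono ((c.integrable _).sub (hint ν)) (hni ν hgν inferInstance) fun x => ?_
      have := hcd x
      rw [abs_sub_comm] at this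
      exact (le_abs_self _).trans this
    have a3 := hB c
    have a4 : (L : ℝ) * ∫ x, ‖φ x - g x‖ ∂μ ≤ L * ε := mul_le_mul_of_nonneg_left (by linarith) L.2
    nlinarith
  by_contra hcon
  push Not at hcon
  have hL1 : (0 : ℝ) < L + 1 := by positivity
  have := key ((∫ x, F.circR (φ x) ∂μ - ∫ x, φ x ∂ν - B) / (2 * (L + 1))) (by
    apply div_pos <;> linarith)
  have e : ((L : ℝ) + 1) * ((∫ x, F.circR (φ x) ∂μ - ∫ x, φ x ∂ν - B) / (2 * (L + 1))) = (∫ x, F.circR (φ x) ∂μ - ∫ x, φ x ∂ν - B) / 2 := by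
    field_simp
  rw [e] at this
  linarith

lemma ent_ac (F : EntropyFn) (h : F.Superlinear) (μ ν : Measure X) [IsFiniteMeasure μ] [IsFiniteMeasure ν]
    (B : ℝ) (hB : ∀ φ : X →ᵇ ℝ, ∫ x, F.circR (φ x) ∂μ - ∫ x, φ x ∂ν ≤ B) : ν ≪ μ := by
  refine Measure.AbsolutelyContinuous.mk fun A hA hμ => ?_
  have key : ∀ n : ℕ, n * ν.real A ≤ B := by
    intro n
    have h1 := F.ent_ext h μ ν B hB (A.indicator fun _ => -(n : ℝ)) (measurable_const.indicator hA) n (by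
      intro x
      by_cases hx : x ∈ A <;> simp [hx])
    rw [integral_indicator_const _ hA] at h1
    have h2 : ∫ x, F.circR (A.indicator (fun _ => -(n : ℝ)) x) ∂μ = ∫ x, F.circR 0 ∂μ := by
      apply integral_congr_ae
      have : ∀ᵐ x ∂μ, x ∉ A := measure_eq_zero_iff_ae_notMem.1 hμ
      filter_upwards [this] with x hx
      simp [hx]
    have h3 : 0 ≤ ∫ x, F.circR 0 ∂μ := integral_nonneg fun _ => F.circR_zero_nonneg h
    rw [h2] at h1
    simp only [smul_eq_mul] at h1
    linarith
  by_contra hne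
  have hpos : 0 < ν.real A := by
    rw [measureReal_def]
    exact ENNReal.toReal_pos hne (measure_ne_top _ _)
  obtain ⟨n, hn⟩ := exists_nat_gt (B / ν.real A)
  rw [div_lt_iff₀ hpos] at hn
  linarith [key n]

def sel (F : EntropyFn) (q : ℕ → ℝ) : ℕ → ℝ → ℝ
  | 0, _ => 0
  | n+1, s => if F.circR (sel F q n s) - sel F q n s * s < F.circR (q n) - q n * s then q n else sel F q n s

lemma sel_meas (F : EntropyFn) (h : F.Superlinear) (q : ℕ → ℝ) (n : ℕ) : Measurable (F.sel q n) := by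
  have hcm : Measurable F.circR := (F.circR_continuous h).measurable
  induction n with
  | zero => exact measurable_const
  | succ n ih =>
    refine Measurable.ite (measurableSet_lt ?_ ?_) measurable_const ih
    · exact (hcm.comp ih).sub (ih.mul measurable_id)
    · fun_prop

lemma sel_bdd (F : EntropyFn) (q : ℕ → ℝ) (n : ℕ) : ∃ M, ∀ s, |F.sel q n s| ≤ M := by
  induction n with
  | zero => exact ⟨0, fun s => by simp [sel]⟩
  | succ n ih =>
    obtain ⟨M, hM⟩ := ih
    refine ⟨max M |q n|, fun s => ?_⟩
    simp only [sel]
    split_ifs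
    · exact le_max_right _ _
    · exact (hM s).trans (le_max_left _ _)

def selU (F : EntropyFn) (q : ℕ → ℝ) (n : ℕ) (s : ℝ) : ℝ := F.circR (F.sel q n s) - F.sel q n s * s

lemma selU_succ (F : EntropyFn) (q : ℕ → ℝ) (n : ℕ) (s : ℝ) :
    F.selU q (n+1) s = max (F.selU q n s) (F.circR (q n) - q n * s) := by
  simp only [selU, sel]
  split_ifs with h1
  · rw [max_eq_right h1.le]
  · rw [max_eq_left (not_lt.1 h1)]

lemma selU_mono (F : EntropyFn) (q : ℕ → ℝ) (s : ℝ) : Monotone (fun n => F.selU q n s) :=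
  monotone_nat_of_le_succ fun n => by rw [selU_succ]; exact le_max_left _ _

lemma selU_nonneg (F : EntropyFn) (h : F.Superlinear) (q : ℕ → ℝ) (n : ℕ) (s : ℝ) : 0 ≤ F.selU q n s := by
  refine le_trans ?_ (F.selU_mono q s (Nat.zero_le n))
  simp [selU, sel, F.circR_zero_nonneg h]

lemma F_le_iSup (F : EntropyFn) (h : F.Superlinear) (q : ℕ → ℝ) (hq : DenseRange q) (s : ℝ) (hs : 0 ≤ s) :
    F.F s ≤ ⨆ n, ENNReal.ofReal (F.selU q n s) := by
  apply le_of_forall_lt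
  intro t ht
  obtain ⟨t', ht1, ht2⟩ := ENNReal.lt_iff_exists_nnreal_btwn.1 ht
  refine ht1.trans_le ?_
  rw [← ENNReal.ofReal_coe_nnreal] at ht2 ⊢
  obtain ⟨φ, hφ⟩ := F.biconj h hs ht2
  have ho : IsOpen {ψ : ℝ | (t' : ℝ) < F.circR ψ - ψ * s} :=
    isOpen_lt continuous_const ((F.circR_continuous h).sub (continuous_id.mul continuous_const))
  obtain ⟨n, hn⟩ := hq.exists_mem_open ho ⟨φ, hφ⟩
  refine le_trans (ENNReal.ofReal_le_ofReal ?_) (le_iSup (fun n => ENNReal.ofReal (F.selU q n s)) (n+1))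
  rw [selU_succ]
  exact (le_of_lt hn).trans (le_max_right _ _)

theorem ent_lemma (F : EntropyFn) (h : F.Superlinear) (μ ν : Measure X) [IsFiniteMeasure μ] [IsFiniteMeasure ν]
    (B : ℝ) (hB : ∀ φ : X →ᵇ ℝ, ∫ x, F.circR (φ x) ∂μ - ∫ x, φ x ∂ν ≤ B) :
    ν ≪ μ ∧ ∫⁻ x, F.F (ν.rnDeriv μ x).toReal ∂μ ≤ ENNReal.ofReal B := by
  have hac := F.ent_ac h μ ν B hB
  refine ⟨hac, ?_⟩
  have hcm : Measurable F.circR := (F.circR_continuous h).measurable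
  set g : X → ℝ := fun x => (ν.rnDeriv μ x).toReal with hg
  have hgm : Measurable g := (Measure.measurable_rnDeriv _ _).ennreal_toReal
  let q : ℕ → ℝ := denseSeq ℝ
  have hUm : ∀ n, Measurable (fun x => F.selU q n (g x)) := by
    intro n
    have : Measurable (F.selU q n) := (hcm.comp (F.sel_meas h q n)).sub ((F.sel_meas h q n).mul measurable_id)
    exact this.comp hgm
  calc ∫⁻ x, F.F (g x) ∂μ ≤ ∫⁻ x, ⨆ n, ENNReal.ofReal (F.selU q n (g x)) ∂μ :=
        lintegral_mono fun x => F.F_le_iSup h q (denseRange_denseSeq ℝ) _ ENNReal.toReal_nonneg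
    _ = ⨆ n, ∫⁻ x, ENNReal.ofReal (F.selU q n (g x)) ∂μ :=
        lintegral_iSup (fun n => (hUm n).ennreal_ofReal)
          (fun a b hab x => ENNReal.ofReal_le_ofReal (F.selU_mono q (g x) hab))
    _ ≤ ENNReal.ofReal B := by
        refine iSup_le fun n => ?_
        obtain ⟨M, hM⟩ := F.sel_bdd q n
        have hsm : Measurable (fun x => F.sel q n (g x)) := (F.sel_meas h q n).comp hgm
        have hext := F.ent_ext h μ ν B hB (fun x => F.sel q n (g x)) hsm M (fun x => hM _)
        have e1 : ∫ x, F.sel q n (g x) ∂ν = ∫ x, F.sel q n (g x) * g x ∂μ := by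
          rw [← integral_rnDeriv_smul hac]
          refine integral_congr_ae (ae_of_all _ fun x => ?_)
          simp only [smul_eq_mul, hg]; ring
        have i0 : Integrable g μ := Measure.integrable_toReal_rnDeriv
        have i1 : Integrable (fun x => F.sel q n (g x) * g x) μ :=
          i0.bdd_mul hsm.aestronglyMeasurable (ae_of_all _ fun x => hM _)
        have i2 : Integrable (fun x => F.circR (F.sel q n (g x))) μ := by
          refine Integrable.of_bound (hcm.comp hsm).aestronglyMeasurable (max (F.circR M) (-F.circR (-M))) (ae_of_all _ fun x => ?_)
          rw [Real.norm_eq_abs, abs_le']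
          have := abs_le.1 (hM (g x))
          exact ⟨(F.circR_mono h this.2).trans (le_max_left _ _),
            (neg_le_neg (F.circR_mono h this.1)).trans (le_max_right _ _)⟩
        rw [e1, ← integral_sub i2 i1] at hext
        have i3 : Integrable (fun x => F.selU q n (g x)) μ := i2.sub i1
        rw [← ofReal_integral_eq_lintegral_ofReal i3 (ae_of_all _ fun x => F.selU_nonneg h q n _)]
        exact ENNReal.ofReal_le_ofReal hext
end
end EntropyFn
end

noncomputable section
open MeasureTheory Filter Set Topology TopologicalSpace
open scoped ENNReal NNReal BoundedContinuousFunction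
set_option linter.unusedSectionVars false
set_option linter.style.haveILetI false

lemma lsc_approx {W Z : Type*} [TopologicalSpace W] [MetrizableSpace W] [TopologicalSpace Z]
    (i : Z → W) (hi : IsInducing i) (c : Z → ℝ≥0∞) (hc : LowerSemicontinuous c) :
    ∃ ck : ℕ → C(W, ℝ), (∀ w, Monotone fun k => ck k w) ∧ (∀ k w, 0 ≤ ck k w) ∧
      ∀ z, ⨆ k, ENNReal.ofReal (ck k (i z)) = c z := by
  letI := metrizableSpaceMetric W
  let g : ℕ → W → ℝ≥0∞ := fun k w => min k (⨅ z, c z + k * edist w (i z))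
  have gtop : ∀ k w, g k w ≠ ∞ := fun k w => ne_top_of_le_ne_top (ENNReal.natCast_ne_top k) (min_le_left _ _)
  have glip : ∀ k w w', g k w ≤ g k w' + k * edist w w' := by
    intro k w w'
    change min _ _ ≤ min _ _ + _
    rw [min_add]
    refine le_min ((min_le_left _ _).trans le_self_add) ((min_le_right _ _).trans ?_)
    rw [ENNReal.iInf_add]
    refine le_iInf fun z => (iInf_le _ z).trans ?_
    rw [add_assoc, ← mul_add]
    gcongr
    rw [add_comm]
    exact edist_triangle _ _ _
  have glip' : ∀ k : ℕ, LipschitzWith k (fun w => (g k w).toReal) := by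
    intro k
    refine LipschitzWith.of_le_add_mul _ fun w w' => ?_
    have h1 := ENNReal.toReal_mono (by
      exact ENNReal.add_ne_top.2 ⟨gtop _ _, ENNReal.mul_ne_top (ENNReal.natCast_ne_top k) (edist_ne_top _ _)⟩) (glip k w w')
    rw [ENNReal.toReal_add (gtop _ _) (ENNReal.mul_ne_top (ENNReal.natCast_ne_top k) (edist_ne_top _ _)), ENNReal.toReal_mul, edist_dist, ENNReal.toReal_ofReal dist_nonneg] at h1
    simpa using h1
  refine ⟨fun k => ⟨_, (glip' k).continuous⟩, ?_, fun k w => ENNReal.toReal_nonneg, ?_⟩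
  · intro w a b hab
    refine ENNReal.toReal_mono (gtop _ _) ?_
    have : (a : ℝ≥0∞) ≤ b := by exact_mod_cast hab
    refine min_le_min this (iInf_mono fun z => ?_)
    gcongr
  · intro z
    simp only [ContinuousMap.coe_mk, ENNReal.ofReal_toReal (gtop _ _)]
    apply le_antisymm
    · refine iSup_le fun k => (min_le_right _ _).trans ((iInf_le _ z).trans ?_)
      simp
    · apply le_of_forall_lt
      intro t ht
      obtain ⟨t', ht1, ht2⟩ := ENNReal.lt_iff_exists_nnreal_btwn.1 ht
      refine ht1.trans_le ?_
      have hopen : {w | (t' : ℝ≥0∞) < c w} ∈ 𝓝 z := hc z _ ht2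
      rw [hi.nhds_eq_comap, (Metric.nhds_basis_eball.comap i).mem_iff] at hopen
      obtain ⟨δ, hδ, hδs⟩ := hopen
      obtain ⟨n, hn⟩ : ∃ n : ℕ, (t' : ℝ≥0∞) / δ < n := ENNReal.exists_nat_gt (ENNReal.div_ne_top ENNReal.coe_ne_top hδ.ne')
      obtain ⟨n', hn'⟩ : ∃ n : ℕ, (t' : ℝ≥0∞) < n := ENNReal.exists_nat_gt ENNReal.coe_ne_top
      refine le_trans ?_ (le_iSup _ (max n n'))
      refine le_min (hn'.le.trans (by exact_mod_cast le_max_right _ _)) (le_iInf fun w => ?_)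
      by_cases hw : edist (i z) (i w) < δ
      · have : w ∈ {w | (t' : ℝ≥0∞) < c w} := hδs (by simpa [edist_comm] using hw)
        exact (le_of_lt this).trans le_self_add
      · push Not at hw
        refine le_trans ?_ le_add_self
        calc (t' : ℝ≥0∞) ≤ n * δ := by
              by_cases hδt : δ = ∞
              · rw [hδt] at hw
                exact absurd hw (not_le.2 (edist_lt_top _ _))
              · exact (ENNReal.div_le_iff hδ.ne' hδt).1 hn.le
          _ ≤ _ := by
              gcongr
              exact le_max_left _ _
end

noncomputable section
open MeasureTheory Filter Set Topology TopologicalSpace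
open scoped ENNReal NNReal BoundedContinuousFunction
open scoped CompactlySupported
set_option linter.unusedSectionVars false
set_option linter.style.haveILetI false

theorem hb_riesz {W V : Type*} [TopologicalSpace W] [CompactSpace W] [T2Space W]
    [MeasurableSpace W] [BorelSpace W] [AddCommGroup V] [Module ℝ V]
    (T : V →ₗ[ℝ] C(W, ℝ)) (G : V → ℝ) (hG : ConcaveOn ℝ univ G) (𝒞 : Set C(W, ℝ)) (h𝒞 : Convex ℝ 𝒞)
    (D : ℝ) (hD : ∀ v, ∀ c ∈ 𝒞, (∀ w, T v w < c w) → G v ≤ D)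
    (v0 : V) (c0 : C(W, ℝ)) (hc0 : c0 ∈ 𝒞) (hv0 : ∀ w, T v0 w < c0 w) :
    ∃ P : Measure W, IsFiniteMeasure P ∧ ∀ v, ∀ c ∈ 𝒞,
      G v + ∫ w, c w ∂P ≤ D + ∫ w, T v w ∂P := by
  let A : Set (C(W, ℝ) × ℝ) := {z | ∃ v, ∃ c ∈ 𝒞, (∀ w, (T v - c) w < z.1 w) ∧ z.2 < G v}
  have hAo : IsOpen A := by
    have : A = ⋃ v, ⋃ c ∈ 𝒞, ({f : C(W, ℝ) | ∀ w, (T v - c) w < f w} ×ˢ Iio (G v)) := by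
      ext ⟨f, t⟩
      simp only [A, mem_iUnion, mem_prod, mem_ofPred_eq, mem_Iio, exists_prop]
    rw [this]
    refine isOpen_iUnion fun v => isOpen_biUnion fun c _ => IsOpen.prod ?_ isOpen_Iio
    have h1 : {f : C(W, ℝ) | ∀ w, (T v - c) w < f w} = (fun f => f - (T v - c)) ⁻¹' {f : C(W, ℝ) | MapsTo f univ (Ioi 0)} := by
      ext f
      simp [MapsTo]
    rw [h1]
    exact (ContinuousMap.isOpen_setOfPred_mapsTo isCompact_univ isOpen_Ioi).preimage (by fun_prop)
  have hAc : Convex ℝ A := by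
    rintro ⟨f, t⟩ ⟨v, c, hc, h1, h2⟩ ⟨f', t'⟩ ⟨v', c', hc', h1', h2'⟩ a b ha hb hab
    refine ⟨a • v + b • v', a • c + b • c', h𝒞 hc hc' ha hb hab, fun w => ?_, ?_⟩
    · have e1 := h1 w
      have e2 := h1' w
      simp only [ContinuousMap.sub_apply] at e1 e2
      simp only [map_add, map_smul, ContinuousMap.sub_apply, ContinuousMap.add_apply, ContinuousMap.smul_apply, smul_eq_mul, Prod.fst_add, Prod.smul_fst]
      rcases ha.eq_or_lt with rfl | ha'
      · have : b = 1 := by linarith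
        subst this; linarith
      · nlinarith
    · have e := hG.2 (mem_univ v) (mem_univ v') ha hb hab
      simp only [smul_eq_mul] at e h2 h2'
      refine lt_of_lt_of_le ?_ e
      simp only [Prod.snd_add, Prod.smul_snd, smul_eq_mul]
      rcases ha.eq_or_lt with rfl | ha'
      · have : b = 1 := by linarith
        subst this; linarith
      · nlinarith
  have hA0 : ((0 : C(W, ℝ)), D) ∉ A := by
    rintro ⟨v, c, hc, h1, h2⟩
    have := hD v c hc (fun w => by simpa using h1 w)
    simp only at h2
    linarith
  obtain ⟨L, hL⟩ := geometric_hahn_banach_open_point hAc hAo hA0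
  let l : C(W, ℝ) →ₗ[ℝ] ℝ := L.toLinearMap.comp (LinearMap.inl ℝ C(W, ℝ) ℝ)
  let α : ℝ := L (0, 1)
  have hdec : ∀ f t, L (f, t) = l f + t * α := by
    intro f t
    have : (f, t) = (f, (0:ℝ)) + t • ((0 : C(W, ℝ)), (1:ℝ)) := by simp
    rw [this, map_add, map_smul]
    rfl
  have hL' : ∀ f t, (f, t) ∈ A → l f + t * α < D * α := by
    intro f t h
    have := hL _ h
    rw [hdec, hdec] at this
    simpa using this
  have hα : 0 < α := by
    have := hL' 0 (min (G v0) D - 1) ⟨v0, c0, hc0, fun w => by simpa using hv0 w, by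
      have := min_le_left (G v0) D
      simp only; linarith⟩
    rw [map_zero, zero_add] at this
    have h2 := min_le_right (G v0) D
    by_contra hneg
    push Not at hneg
    nlinarith
  have hpos : ∀ f : C(W, ℝ), 0 ≤ f → l f ≤ 0 := by
    intro f hf
    by_contra hneg
    push Not at hneg
    have key : ∀ s : ℝ, 0 ≤ s → s * l f < (D - (G v0 - 1)) * α := by
      intro s hs
      have := hL' (s • f) (G v0 - 1) ⟨v0, c0, hc0, fun w => by
        have h1 := hv0 w
        have h2 : 0 ≤ f w := hf w
        have : 0 ≤ s * f w := by positivity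
        simp only [ContinuousMap.sub_apply, ContinuousMap.smul_apply, smul_eq_mul]
        linarith, by simp⟩
      rw [map_smul, smul_eq_mul] at this
      linarith
    have h0 := key 0 le_rfl
    have h1 := key (((D - (G v0 - 1)) * α) / l f) (by apply div_nonneg <;> linarith)
    rw [div_mul_cancel₀ _ hneg.ne'] at h1
    linarith
  let Λl : C_c(W, ℝ) →ₗ[ℝ] ℝ :=
    { toFun := fun f => - (l f.toContinuousMap) / α
      map_add' := fun f g => by
        have : (f + g).toContinuousMap = f.toContinuousMap + g.toContinuousMap := rfl
        rw [this, map_add]; ring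
      map_smul' := fun r f => by
        have : (r • f).toContinuousMap = r • f.toContinuousMap := rfl
        rw [this, map_smul]; simp; ring }
  let Λ : C_c(W, ℝ) →ₚ[ℝ] ℝ := PositiveLinearMap.mk₀ Λl (fun f hf => by
    have : l f.toContinuousMap ≤ 0 := hpos _ (fun w => hf w)
    apply div_nonneg _ hα.le
    linarith)
  let P := RealRMK.rieszMeasure Λ
  have hP : ∀ f : C(W, ℝ), ∫ w, f w ∂P = - (l f) / α := by
    intro f
    have := RealRMK.integral_rieszMeasure Λ (CompactlySupportedContinuousMap.continuousMapEquiv f)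
    exact this
  refine ⟨P, inferInstance, fun v c hc => ?_⟩
  rw [hP, hP]
  have key : ∀ δ > 0, (G v + - l c / α) - (D + - l (T v) / α) ≤ δ * (1 - l 1 / α) := by
    intro δ hδ
    have := hL' (T v - c + δ • 1) (G v - δ) ⟨v, c, hc, fun w => by simpa using hδ, by simpa using hδ⟩
    rw [map_add, map_sub, map_smul, smul_eq_mul] at this
    have e : ((G v + - l c / α) - (D + - l (T v) / α)) = ((G v - D) * α - l c + l (T v)) / α := by
      field_simp; ring
    rw [e, div_le_iff₀ hα]
    have e2 : δ * (1 - l 1 / α) * α = δ * (α - l 1) := by field_simp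
    rw [e2]; linarith
  have hκ : 0 < 1 - l 1 / α := by
    have : l 1 ≤ 0 := hpos 1 zero_le_one
    have : l 1 / α ≤ 0 := div_nonpos_of_nonpos_of_nonneg this hα.le
    linarith
  by_contra hcon
  push Not at hcon
  have := key (((G v + - l c / α) - (D + - l (T v) / α)) / (2 * (1 - l 1 / α))) (by
    apply div_pos <;> linarith)
  rw [div_mul_eq_mul_div, le_div_iff₀ (by linarith)] at this
  nlinarith
end

noncomputable section
open MeasureTheory Filter Set Topology TopologicalSpace
open scoped ENNReal NNReal BoundedContinuousFunction
set_option linter.unusedSectionVars false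
set_option linter.style.haveILetI false

lemma posE_eq (a : EReal) : posE a = a.toENNReal := rfl

section
variable {α : Type*} [MeasurableSpace α] {μ : Measure α}

lemma eIntegral_mono_ae {f g : α → EReal} (h : ∀ᵐ x ∂μ, f x ≤ g x) : eIntegral μ f ≤ eIntegral μ g := by
  unfold eIntegral
  apply EReal.sub_le_sub
  · rw [EReal.coe_ennreal_le_coe_ennreal_iff]
    exact lintegral_mono_ae (h.mono fun x hx => EReal.toENNReal_le_toENNReal hx)
  · rw [EReal.coe_ennreal_le_coe_ennreal_iff]
    exact lintegral_mono_ae (h.mono fun x hx => EReal.toENNReal_le_toENNReal (EReal.neg_le_neg_iff.2 hx))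

lemma eIntegral_mono {f g : α → EReal} (h : ∀ x, f x ≤ g x) : eIntegral μ f ≤ eIntegral μ g :=
  eIntegral_mono_ae (ae_of_all _ h)

lemma eIntegral_congr_ae {f g : α → EReal} (h : ∀ᵐ x ∂μ, f x = g x) : eIntegral μ f = eIntegral μ g :=
  le_antisymm (eIntegral_mono_ae (h.mono fun _ h => h.le)) (eIntegral_mono_ae (h.mono fun _ h => h.ge))

lemma eIntegral_coe {f : α → ℝ} (hf : Integrable f μ) :
    eIntegral μ (fun x => (f x : EReal)) = ((∫ x, f x ∂μ : ℝ) : EReal) := by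
  unfold eIntegral
  have e1 : ∀ x, posE (f x : EReal) = ENNReal.ofReal (f x) := fun x => by simp [posE]
  have e2 : ∀ x, posE (-(f x : EReal)) = ENNReal.ofReal (-f x) := fun x => by
    rw [← EReal.coe_neg]; simp [posE]
  simp only [e1, e2]
  rw [integral_eq_lintegral_pos_part_sub_lintegral_neg_part hf, EReal.coe_sub]
  have h1 : ∫⁻ x, ENNReal.ofReal (f x) ∂μ ≠ ∞ := hf.lintegral_lt_top.ne
  have h2 : ∫⁻ x, ENNReal.ofReal (-f x) ∂μ ≠ ∞ := hf.neg.lintegral_lt_top.ne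
  rw [EReal.coe_ennreal_toReal h1, EReal.coe_ennreal_toReal h2]

lemma eIntegral_add {h : α → ℝ≥0∞} (hh : Measurable h) {r : α → ℝ} (hr : Integrable r μ) :
    eIntegral μ (fun x => (h x : EReal) + (r x : EReal)) =
      ((∫⁻ x, h x ∂μ : ℝ≥0∞) : EReal) + ((∫ x, r x ∂μ : ℝ) : EReal) := by
  have hrt : ∫⁻ x, ‖r x‖ₑ ∂μ < ∞ := hr.2
  by_cases hfin : ∫⁻ x, h x ∂μ = ∞
  · have key : ∀ x, h x ≤ posE ((h x : EReal) + (r x : EReal)) + ‖r x‖ₑ := by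
      intro x
      by_cases hx : h x = ∞
      · simp [hx, posE]
      · lift h x to ℝ≥0 using hx with a
        have : ((a : ℝ≥0∞) : EReal) + (r x : EReal) = ((a + r x : ℝ) : EReal) := by
          rw [EReal.coe_add]; rfl
        rw [this]
        simp only [posE, EReal.coe_ne_top, if_false, EReal.toReal_coe]
        rw [Real.enorm_eq_ofReal_abs, ← ENNReal.ofReal_coe_nnreal]
        refine le_trans (ENNReal.ofReal_le_ofReal ?_) ENNReal.ofReal_add_le
        have := neg_abs_le (r x)
        linarith
    have h1 : ∫⁻ x, posE ((h x : EReal) + (r x : EReal)) ∂μ = ∞ := by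
      by_contra hne
      have := lintegral_mono (μ := μ) key
      rw [lintegral_add_right' _ hr.1.enorm, hfin] at this
      exact absurd (top_le_iff.1 this) (ENNReal.add_ne_top.2 ⟨hne, hrt.ne⟩)
    have key2 : ∀ x, posE (-((h x : EReal) + (r x : EReal))) ≤ ‖r x‖ₑ := by
      intro x
      have : -((h x : EReal) + (r x : EReal)) ≤ ((|r x| : ℝ) : EReal) := by
        rw [EReal.neg_le]
        calc -((|r x| : ℝ) : EReal) = 0 + ((-|r x| : ℝ) : EReal) := by simp
          _ ≤ _ := by
            gcongr
            · exact EReal.coe_ennreal_nonneg _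
            · exact_mod_cast neg_abs_le _
      refine (EReal.toENNReal_le_toENNReal this).trans ?_
      rw [Real.enorm_eq_ofReal_abs]
      simp
    have h2 : ∫⁻ x, posE (-((h x : EReal) + (r x : EReal))) ∂μ ≠ ∞ :=
      ((lintegral_mono key2).trans_lt hrt).ne
    unfold eIntegral
    rw [h1, hfin]
    lift ∫⁻ x, posE (-((h x : EReal) + (r x : EReal))) ∂μ to ℝ≥0 using h2 with b
    simp only [EReal.coe_ennreal_top]
    rw [EReal.top_add_coe]
    exact EReal.top_sub_coe (b : ℝ)
  · have hfa := ae_lt_top hh hfin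
    have hi : Integrable (fun x => (h x).toReal) μ := integrable_toReal_of_lintegral_ne_top hh.aemeasurable hfin
    have : eIntegral μ (fun x => (h x : EReal) + (r x : EReal)) =
        eIntegral μ (fun x => (((h x).toReal + r x : ℝ) : EReal)) := by
      apply eIntegral_congr_ae
      filter_upwards [hfa] with x hx
      rw [EReal.coe_add, EReal.coe_ennreal_toReal hx.ne]
    have e3 := eIntegral_coe (hi.add hr)
    simp only [Pi.add_apply] at e3
    rw [this, e3, integral_add hi hr, EReal.coe_add, integral_toReal hh.aemeasurable hfa,
      EReal.coe_ennreal_toReal hfin]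
end

lemma EntropyFn.F_meas (F : EntropyFn) {α : Type*} [MeasurableSpace α] {g : α → ℝ≥0∞} (hg : Measurable g) :
    Measurable (fun x => F.F (g x).toReal) := by
  have h1 : LowerSemicontinuous (fun s : ℝ => F.F (max s 0)) := by
    intro x y hy
    have h := F.lsc (max x 0) (by simp) y hy
    have hc : Tendsto (fun s : ℝ => max s 0) (𝓝 x) (𝓝[Ici 0] (max x 0)) :=
      tendsto_nhdsWithin_iff.2 ⟨(by fun_prop : Continuous fun s : ℝ => max s 0).tendsto x,
        Eventually.of_forall fun s => by simp⟩
    exact hc.eventually h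
  have h2 := h1.measurable.comp hg.ennreal_toReal
  have : (fun x => F.F (g x).toReal) = (fun s : ℝ => F.F (max s 0)) ∘ (fun x => (g x).toReal) := by
    ext x; simp
  rw [this]; exact h2

section
variable {X₁ X₂ : Type*} [TopologicalSpace X₁] [TopologicalSpace X₂] [MetrizableSpace X₂]
  [SecondCountableTopology X₂] [MeasurableSpace X₂] [BorelSpace X₂]

theorem cost_decomp (C : X₁ → ProbabilityMeasure X₂ → EReal)
    (hClsc : LowerSemicontinuous fun q : X₁ × ProbabilityMeasure X₂ => C q.1 q.2)
    (K : ℝ) (hK : ∀ x p, (K : EReal) ≤ C x p)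
    (hCconv : ∀ (x : X₁) (p q m : ProbabilityMeasure X₂) (t : ℝ), 0 ≤ t → t ≤ 1 →
      (m : Measure X₂) = ENNReal.ofReal t • (p : Measure X₂)
          + ENNReal.ofReal (1 - t) • (q : Measure X₂) →
      C x m ≤ (t : EReal) * C x p + ((1 - t : ℝ) : EReal) * C x q) :
    ∃ c : X₁ × ProbabilityMeasure X₂ → ℝ≥0∞, LowerSemicontinuous c ∧ (∀ x p, C x p = (c (x, p) : EReal) + (K : EReal)) ∧
      ∀ x, PMConvex (fun p => c (x, p)) := by
  have hc : ∀ x p, C x p = (((C x p - K).toENNReal : ℝ≥0∞) : EReal) + (K : EReal) := by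
    intro x p
    rw [EReal.coe_toENNReal ((EReal.sub_nonneg (by simp) (by simp)).2 (hK x p))]
    exact (EReal.sub_add_cancel).symm
  refine ⟨fun q => (C q.1 q.2 - K).toENNReal, ?_, hc, ?_⟩
  · have hcont : Continuous fun a : EReal => (a - (K : EReal)).toENNReal := by
      refine EReal.continuous_toENNReal.comp ?_
      rw [continuous_iff_continuousAt]
      intro a
      have := (EReal.continuousAt_add (p := (a, -(K : EReal))) (by right; simp) (by right; simp))
      have h2 : ContinuousAt (fun a : EReal => (a, -(K : EReal))) a := by fun_prop
      exact this.comp (f := fun a : EReal => (a, -(K : EReal))) h2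
    exact hcont.comp_lowerSemicontinuous hClsc (fun a b hab => EReal.toENNReal_le_toENNReal (EReal.sub_le_sub hab le_rfl))
  · intro x p q m t h0 h1 hm
    have h := hCconv x p q m t h0 h1 hm
    rw [hc x m, hc x p, hc x q] at h
    simp only
    generalize (C x m - K).toENNReal = a at *
    generalize (C x p - K).toENNReal = b at *
    generalize (C x q - K).toENNReal = d at *
    have e1 : ∀ (s : ℝ) (hs : 0 ≤ s) (b : ℝ≥0∞), (s : EReal) * ((b : EReal) + (K : EReal)) =
        ((ENNReal.ofReal s * b : ℝ≥0∞) : EReal) + ((s * K : ℝ) : EReal) := by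
      intro s hs b
      rw [EReal.left_distrib_of_nonneg_of_ne_top (by exact_mod_cast hs) (by simp), EReal.coe_ennreal_mul, EReal.coe_ennreal_ofReal, max_eq_left hs, EReal.coe_mul]
    rw [e1 t h0, e1 (1 - t) (by linarith)] at h
    have e2 : ((ENNReal.ofReal t * b : ℝ≥0∞) : EReal) + ((t * K : ℝ) : EReal) +
       (((ENNReal.ofReal (1-t) * d : ℝ≥0∞) : EReal) + (((1-t) * K : ℝ) : EReal)) =
       ((ENNReal.ofReal t * b + ENNReal.ofReal (1-t) * d : ℝ≥0∞) : EReal) + (K : EReal) := by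
      rw [EReal.coe_ennreal_add, add_add_add_comm, ← EReal.coe_add]
      congr 3; ring
    rw [e2] at h
    have h' := (EReal.addLECancellable_coe K).add_le_add_iff_right.1 h
    exact_mod_cast h'
end
end

noncomputable section
open MeasureTheory Filter Set Topology TopologicalSpace
open scoped ENNReal NNReal BoundedContinuousFunction
set_option linter.unusedSectionVars false
set_option linter.style.haveILetI false

section
variable {X : Type*} [MeasurableSpace X]

lemma entF_ac {F : EntropyFn} (h : F.Superlinear) {γ μ : Measure X} [IsFiniteMeasure γ] [IsFiniteMeasure μ]
    (hf : entF F γ μ ≠ ∞) : γ ≪ μ := by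
  rw [entF, ENNReal.add_ne_top] at hf
  have h2 := hf.2
  rw [show F.recC = ∞ from h] at h2
  have : (γ.singularPart μ) univ = 0 := by
    by_contra hne
    exact h2 (ENNReal.top_mul hne)
  rw [Measure.measure_univ_eq_zero, Measure.singularPart_eq_zero] at this
  exact this

lemma entF_of_ac {F : EntropyFn} {γ μ : Measure X} [IsFiniteMeasure γ] [IsFiniteMeasure μ]
    (h : γ ≪ μ) : entF F γ μ = ∫⁻ x, F.F ((γ.rnDeriv μ x).toReal) ∂μ := by
  rw [entF, (Measure.singularPart_eq_zero _ _).2 h]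
  simp
end

section
variable {X₁ X₂ : Type*} [TopologicalSpace X₁] [PolishSpace X₁] [MeasurableSpace X₁] [BorelSpace X₁]
  [TopologicalSpace X₂] [PolishSpace X₂]
  [MeasurableSpace X₂] [BorelSpace X₂] [Nonempty X₂]

def kpm (κ : ProbabilityTheory.Kernel X₁ X₂) [ProbabilityTheory.IsMarkovKernel κ] (x : X₁) : ProbabilityMeasure X₂ :=
  ⟨κ x, inferInstance⟩

lemma kpm_meas (κ : ProbabilityTheory.Kernel X₁ X₂) [ProbabilityTheory.IsMarkovKernel κ] : Measurable (kpm κ) :=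
  κ.measurable.subtype_mk

lemma cost_meas (c : X₁ × ProbabilityMeasure X₂ → ℝ≥0∞) (hc : LowerSemicontinuous c)
    (κ : ProbabilityTheory.Kernel X₁ X₂) [ProbabilityTheory.IsMarkovKernel κ] :
    Measurable (fun x => c (x, kpm κ x)) :=
  hc.measurable.comp (measurable_id.prodMk (kpm_meas κ))

lemma wCost_eq (C : X₁ → ProbabilityMeasure X₂ → EReal) (c : X₁ × ProbabilityMeasure X₂ → ℝ≥0∞) (hc : LowerSemicontinuous c)
    (K : ℝ) (hC : ∀ x p, C x p = (c (x, p) : EReal) + (K : EReal)) (F₁ F₂ : EntropyFn)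
    (μ₁ : Measure X₁) (μ₂ : Measure X₂) (γ : Measure (X₁ × X₂)) [hγ : IsFiniteMeasure γ] :
    wCost C F₁ F₂ μ₁ μ₂ γ hγ = ((entF F₁ γ.fst μ₁ : ℝ≥0∞) : EReal) + ((entF F₂ γ.snd μ₂ : ℝ≥0∞) : EReal) +
      (((∫⁻ x, c (x, kpm γ.condKernel x) ∂γ.fst : ℝ≥0∞) : EReal) + ((∫ _, K ∂γ.fst : ℝ) : EReal)) := by
  rw [wCost, ← eIntegral_add (cost_meas c hc γ.condKernel) (integrable_const K)]
  congr 1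
  exact eIntegral_congr_ae (ae_of_all _ fun x => hC x (kpm γ.condKernel x))

lemma snd_int (γ : Measure (X₁ × X₂)) [hγ : IsFiniteMeasure γ] (φ : X₂ →ᵇ ℝ) :
    Integrable (fun x => ∫ y, φ y ∂(γ.condKernel x)) γ.fst ∧
    ∫ x, ∫ y, φ y ∂(γ.condKernel x) ∂γ.fst = ∫ y, φ y ∂γ.snd := by
  have h : γ.snd = γ.fst.bind γ.condKernel := by
    conv_lhs => rw [← γ.disintegrate γ.condKernel]
    exact Measure.snd_compProd _ _
  have hi : Integrable φ (γ.fst.bind γ.condKernel) := by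
    rw [← h]; exact φ.integrable _
  refine ⟨integrable_bind_int _ _ _ hi, ?_⟩
  rw [h, integral_bind' _ _ _ hi]

theorem weak_duality (C : X₁ → ProbabilityMeasure X₂ → EReal) (c : X₁ × ProbabilityMeasure X₂ → ℝ≥0∞) (hc : LowerSemicontinuous c)
    (K : ℝ) (hC : ∀ x p, C x p = (c (x, p) : EReal) + (K : EReal)) (F₁ F₂ : EntropyFn)
    (hF₁ : F₁.Superlinear) (hF₂ : F₂.Superlinear)
    (μ₁ : Measure X₁) (μ₂ : Measure X₂) [IsFiniteMeasure μ₁] [IsFiniteMeasure μ₂]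
    (γ : Measure (X₁ × X₂)) (hγ : IsFiniteMeasure γ) (φ : X₂ →ᵇ ℝ) :
    eIntegral μ₁ (fun x₁ => F₁.circ (RCfun C φ x₁)) +
                eIntegral μ₂ (fun x₂ => F₂.circ (((-(φ x₂) : ℝ) : EReal))) ≤ wCost C F₁ F₂ μ₁ μ₂ γ hγ := by
  rw [wCost_eq C c hc K hC]
  set κ := γ.condKernel with hκ
  have hnb : ∀ a : ℝ≥0∞, (a : EReal) ≠ ⊥ := fun a => EReal.coe_ennreal_ne_bot a
  have hnb2 : (((∫⁻ x, c (x, kpm κ x) ∂γ.fst : ℝ≥0∞) : EReal) + ((∫ _, K ∂γ.fst : ℝ) : EReal)) ≠ ⊥ := by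
    rw [Ne, EReal.add_eq_bot_iff]
    exact fun h => h.elim (fun h => hnb _ h) (fun h => EReal.coe_ne_bot _ h)
  by_cases h1 : entF F₁ γ.fst μ₁ = ∞
  · rw [h1, EReal.coe_ennreal_top, EReal.top_add_of_ne_bot (hnb _), EReal.top_add_of_ne_bot hnb2]
    exact le_top
  by_cases h2 : entF F₂ γ.snd μ₂ = ∞
  · rw [h2, EReal.coe_ennreal_top, EReal.add_top_of_ne_bot (hnb _), EReal.top_add_of_ne_bot hnb2]
    exact le_top
  have ac1 := entF_ac hF₁ h1
  have ac2 := entF_ac hF₂ h2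
  rw [entF_of_ac ac1, entF_of_ac ac2]
  obtain ⟨si, se⟩ := snd_int γ φ
  set g₁ := γ.fst.rnDeriv μ₁ with hg1
  set g₂ := γ.snd.rnDeriv μ₂ with hg2
  have mg1 : Measurable g₁ := Measure.measurable_rnDeriv _ _
  have mg2 : Measurable g₂ := Measure.measurable_rnDeriv _ _
  have mm := cost_meas c hc κ
  have ri : Integrable (fun x => (K + ∫ y, φ y ∂(κ x))) γ.fst := (integrable_const K).add si
  have r1i : Integrable (fun x => (g₁ x).toReal * (K + ∫ y, φ y ∂(κ x))) μ₁ :=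
    (integrable_rnDeriv_smul_iff ac1).2 ri
  have r1e : ∫ x, (g₁ x).toReal * (K + ∫ y, φ y ∂(κ x)) ∂μ₁ = ∫ _, K ∂γ.fst + ∫ y, φ y ∂γ.snd := by
    rw [← se, ← integral_add (integrable_const K) si]
    exact integral_rnDeriv_smul ac1 (f := fun x => (K + ∫ y, φ y ∂(κ x)))
  have r2i : Integrable (fun x => (g₂ x).toReal * (-φ x)) μ₂ :=
    (integrable_rnDeriv_smul_iff ac2 (f := fun x => - φ x)).2 (φ.integrable _).neg
  have r2e : ∫ x, (g₂ x).toReal * (-φ x) ∂μ₂ = - ∫ y, φ y ∂γ.snd := by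
    rw [← integral_neg]
    exact integral_rnDeriv_smul ac2 (f := fun x => - φ x)
  have b1 : eIntegral μ₁ (fun x₁ => F₁.circ (RCfun C φ x₁)) ≤
      eIntegral μ₁ (fun x => ((g₁ x * c (x, kpm κ x) + F₁.F (g₁ x).toReal : ℝ≥0∞) : EReal) +
        (((g₁ x).toReal * (K + ∫ y, φ y ∂(κ x)) : ℝ) : EReal)) := by
    apply eIntegral_mono_ae
    filter_upwards [Measure.rnDeriv_lt_top γ.fst μ₁] with x hx
    refine (F₁.circ_le _ ENNReal.toReal_nonneg (s := (g₁ x).toReal)).trans ?_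
    have e0 : (((g₁ x).toReal : ℝ) : EReal) = (g₁ x : EReal) := EReal.coe_ennreal_toReal hx.ne
    have h3 : RCfun C φ x ≤ (c (x, kpm κ x) : EReal) + ((K + ∫ y, φ y ∂(κ x) : ℝ) : EReal) := by
      refine (iInf_le _ (kpm κ x)).trans ?_
      rw [hC, add_assoc, EReal.coe_add]
      rfl
    refine (add_le_add_left (mul_le_mul_of_nonneg_right h3 (by exact_mod_cast ENNReal.toReal_nonneg)) _).trans ?_
    rw [EReal.right_distrib_of_nonneg_of_ne_top (by exact_mod_cast ENNReal.toReal_nonneg) (EReal.coe_ne_top _), e0, EReal.coe_ennreal_add,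
      EReal.coe_ennreal_mul, EReal.coe_mul _ (K + _), e0, mul_comm (g₁ x : EReal), mul_comm (g₁ x : EReal), add_right_comm]
  have b2 : eIntegral μ₂ (fun x₂ => F₂.circ (((-(φ x₂) : ℝ) : EReal))) ≤
      eIntegral μ₂ (fun x => ((F₂.F (g₂ x).toReal : ℝ≥0∞) : EReal) +
        (((g₂ x).toReal * (- φ x) : ℝ) : EReal)) := by
    apply eIntegral_mono
    intro x
    refine (F₂.circ_le _ ENNReal.toReal_nonneg (s := (g₂ x).toReal)).trans ?_
    rw [add_comm, mul_comm, EReal.coe_mul]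
  have mh : Measurable (fun x => g₁ x * c (x, kpm κ x) + F₁.F (g₁ x).toReal) := (mg1.mul mm).add (F₁.F_meas mg1)
  have mh2 : Measurable (fun x => g₁ x * c (x, kpm κ x)) := mg1.mul mm
  rw [eIntegral_add mh r1i, r1e, lintegral_add_left mh2,
    lintegral_rnDeriv_mul ac1 mm.aemeasurable] at b1
  rw [eIntegral_add (F₂.F_meas mg2) r2i, r2e] at b2
  refine (add_le_add b1 b2).trans (le_of_eq ?_)
  rw [EReal.coe_ennreal_add, EReal.coe_add, EReal.coe_neg]
  generalize ((∫⁻ x, c (x, kpm κ x) ∂γ.fst : ℝ≥0∞) : EReal) = a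
  generalize ((∫⁻ x, F₁.F (g₁ x).toReal ∂μ₁ : ℝ≥0∞) : EReal) = b
  generalize ((∫⁻ x, F₂.F (g₂ x).toReal ∂μ₂ : ℝ≥0∞) : EReal) = d
  generalize ∫ y, φ y ∂γ.snd = u
  have hu : (u : EReal) + -(u : EReal) = 0 := by rw [← EReal.coe_neg, ← EReal.coe_add]; simp
  generalize -(u : EReal) = v at *
  calc _ = b + d + (a + ((∫ _, K ∂γ.fst : ℝ) : EReal)) + ((u : EReal) + v) := by
        abel
    _ = _ := by rw [hu, add_zero]
end
end

noncomputable section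
open MeasureTheory Filter Set Topology TopologicalSpace
open scoped ENNReal NNReal BoundedContinuousFunction
set_option linter.unusedSectionVars false
set_option linter.style.haveILetI false

section
variable {X : Type*} [TopologicalSpace X] [MeasurableSpace X] [BorelSpace X]

lemma circR_int (F : EntropyFn) (h : F.Superlinear) (μ : Measure X) [IsFiniteMeasure μ] (φ : X → ℝ)
    (hφ : Continuous φ) (M : ℝ) (hM : ∀ x, |φ x| ≤ M) :
    Integrable (fun x => F.circR (φ x)) μ := by
  refine Integrable.of_bound ((F.circR_continuous h).comp hφ).measurable.aestronglyMeasurable (max (F.circR M) (-F.circR (-M)))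
    (ae_of_all _ fun x => ?_)
  have h1 := abs_le.1 (hM x)
  have a := F.circR_mono h h1.1
  have b := F.circR_mono h h1.2
  rw [Real.norm_eq_abs, abs_le]
  constructor
  · have := le_max_right (F.circR M) (-F.circR (-M)); linarith
  · exact b.trans (le_max_left _ _)

lemma circR_int' (F : EntropyFn) (h : F.Superlinear) (μ : Measure X) [IsFiniteMeasure μ] (φ : X →ᵇ ℝ) :
    Integrable (fun x => F.circR (φ x)) μ :=
  circR_int F h μ φ φ.continuous ‖φ‖ (fun x => φ.norm_coe_le_norm x)

lemma eI_circ (F : EntropyFn) (h : F.Superlinear) (μ : Measure X) [IsFiniteMeasure μ] (φ : X →ᵇ ℝ) :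
    eIntegral μ (fun x => F.circ (φ x)) = ((∫ x, F.circR (φ x) ∂μ : ℝ) : EReal) := by
  rw [← eIntegral_coe (circR_int' F h μ φ)]
  simp only [F.coe_circR h]

lemma conj_exists (F : EntropyFn) (h : F.Superlinear) (ψ : X →ᵇ ℝ)
    (hb : ∃ b : ℝ, ((b : ℝ) : EReal) < ((F.F 0 : ℝ≥0∞) : EReal) ∧ ∀ x, ψ x ≤ b) :
    ∃ φ : X →ᵇ ℝ, (∀ x, (φ x : EReal) = F.revConj (ψ x)) ∧ ∀ x, ψ x ≤ F.circR (φ x) := by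
  obtain ⟨b, hb0, hb⟩ := hb
  have hlt : ∀ x, (ψ x : EReal) < (F.F 0 : EReal) := fun x => (EReal.coe_le_coe_iff.2 (hb x)).trans_lt hb0
  have hcont : Continuous (fun x => (F.revConj (ψ x)).toReal) :=
    (F.revConjR_continuousOn h).comp_continuous ψ.continuous hlt
  have hM : ((-max ‖ψ‖ (-b) : ℝ) : EReal) < (F.F 0 : EReal) := by
    refine lt_of_le_of_lt (EReal.coe_le_coe_iff.2 ?_) hb0
    have := le_max_right ‖ψ‖ (-b); linarith
  have hM2 : ∀ x, -max ‖ψ‖ (-b) ≤ ψ x := by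
    intro x
    have := (abs_le.1 (ψ.norm_coe_le_norm x)).1
    have := le_max_left ‖ψ‖ (-b); linarith
  have hbd : ∀ x, |(F.revConj (ψ x)).toReal| ≤ max (F.revConj b).toReal (-(F.revConj (-max ‖ψ‖ (-b))).toReal) := by
    intro x
    have h1 : (F.revConj (ψ x)).toReal ≤ (F.revConj b).toReal := by
      rw [← EReal.coe_le_coe_iff, F.coe_revConjR h (hlt x), F.coe_revConjR h hb0]
      exact F.revConj_mono (hb x)
    have h2 : (F.revConj (-max ‖ψ‖ (-b))).toReal ≤ (F.revConj (ψ x)).toReal := by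
      rw [← EReal.coe_le_coe_iff, F.coe_revConjR h (hlt x), F.coe_revConjR h hM]
      exact F.revConj_mono (hM2 x)
    rw [abs_le]
    constructor
    · have := le_max_right (F.revConj b).toReal (-(F.revConj (-max ‖ψ‖ (-b))).toReal); linarith
    · exact h1.trans (le_max_left _ _)
  refine ⟨BoundedContinuousFunction.ofNormedAddCommGroup _ hcont _ hbd, fun x => F.coe_revConjR h (hlt x), fun x => ?_⟩
  exact (F.revConj_le_iff h _ _ (hlt x).le).1 (F.coe_revConjR h (hlt x)).ge

lemma circ_exists (F : EntropyFn) (h : F.Superlinear) (φ : X →ᵇ ℝ) (ε : ℝ) (hε : 0 < ε) :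
    ∃ ψ : X →ᵇ ℝ, (∃ b : ℝ, ((b : ℝ) : EReal) < ((F.F 0 : ℝ≥0∞) : EReal) ∧ ∀ x, ψ x ≤ b) ∧
     (∀ x, F.revConj (ψ x) ≤ φ x) ∧ (∀ x, ψ x = F.circR (φ x) - ε) ∧
     (∀ x, F.revConj (ψ x) ≠ ⊤ ∧ F.revConj (ψ x) ≠ ⊥) := by
  have hcont : Continuous (fun x => F.circR (φ x) - ε) := ((F.circR_continuous h).comp φ.continuous).sub continuous_const
  have hM := fun x => abs_le.1 (φ.norm_coe_le_norm x)
  have hbd : ∀ x, |F.circR (φ x) - ε| ≤ max (F.circR ‖φ‖) (-F.circR (-‖φ‖)) + ε := by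
    intro x
    have a := F.circR_mono h (hM x).1
    have b := F.circR_mono h (hM x).2
    have := le_max_left (F.circR ‖φ‖) (-F.circR (-‖φ‖))
    have := le_max_right (F.circR ‖φ‖) (-F.circR (-‖φ‖))
    rw [abs_le]
    constructor <;> linarith
  have hF0 : ∀ t : ℝ, ((F.circR t - ε : ℝ) : EReal) < (F.F 0 : EReal) := by
    intro t
    have h1 := F.circ_le t (le_refl (0:ℝ))
    rw [← F.coe_circR h] at h1
    simp only [EReal.coe_zero, mul_zero, zero_add] at h1
    exact lt_of_lt_of_le (EReal.coe_lt_coe_iff.2 (by linarith)) h1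
  refine ⟨BoundedContinuousFunction.ofNormedAddCommGroup _ hcont _ hbd, ⟨F.circR ‖φ‖ - ε, hF0 _, fun x => ?_⟩, fun x => ?_, fun x => rfl, fun x => ?_⟩
  · have := F.circR_mono h (hM x).2
    change F.circR (φ x) - ε ≤ _
    linarith
  · exact (F.revConj_le_iff h _ _ (hF0 _).le).2 (by change F.circR (φ x) - ε ≤ _; linarith)
  · have : ((F.revConj (F.circR (φ x) - ε)).toReal : EReal) = F.revConj (F.circR (φ x) - ε) := F.coe_revConjR h (hF0 _)
    change F.revConj (F.circR (φ x) - ε) ≠ ⊤ ∧ F.revConj (F.circR (φ x) - ε) ≠ ⊥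
    rw [← this]; simp
end

section
variable {X₁ X₂ : Type*} [TopologicalSpace X₁] [MeasurableSpace X₁] [BorelSpace X₁]
  [TopologicalSpace X₂] [MeasurableSpace X₂] [BorelSpace X₂]
  (C : X₁ → ProbabilityMeasure X₂ → EReal) (F₁ F₂ : EntropyFn)
  (hF₁ : F₁.Superlinear) (hF₂ : F₂.Superlinear)
  (μ₁ : Measure X₁) (μ₂ : Measure X₂) [IsFiniteMeasure μ₁] [IsFiniteMeasure μ₂]

include hF₁ hF₂ in
lemma mem_lamSet (φ : (X₁ →ᵇ ℝ) × (X₂ →ᵇ ℝ)) : φ ∈ lamSet C F₁ F₂ ↔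
    ∀ (x₁ : X₁) (p : ProbabilityMeasure X₂),
        ((φ.1 x₁ + ∫ x₂, φ.2 x₂ ∂(p : Measure X₂) : ℝ) : EReal) ≤ C x₁ p := by
  simp [lamSet, F₁.interior_circDom hF₁, F₂.interior_circDom hF₂]

include hF₁ hF₂ in
theorem D1_le_D3 : sSup { e : EReal | ∃ φ ∈ lamSet C F₁ F₂,
            e = eIntegral μ₁ (fun x => F₁.circ (φ.1 x)) +
                eIntegral μ₂ (fun x => F₂.circ (φ.2 x)) } ≤
    sSup { e : EReal | ∃ φ : X₂ →ᵇ ℝ,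
            e = eIntegral μ₁ (fun x₁ => F₁.circ (RCfun C φ x₁)) +
                eIntegral μ₂ (fun x₂ => F₂.circ (((-(φ x₂) : ℝ) : EReal))) } := by
  apply sSup_le
  rintro _ ⟨φ, hφ, rfl⟩
  rw [mem_lamSet C F₁ F₂ hF₁ hF₂] at hφ
  refine le_trans ?_ (le_sSup ⟨-φ.2, rfl⟩)
  refine add_le_add (eIntegral_mono fun x => F₁.circ_mono (le_iInf fun p => ?_)) (eIntegral_mono fun x => ?_)
  · have h := hφ x p
    simp only [BoundedContinuousFunction.coe_neg, Pi.neg_apply, integral_neg]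
    rw [EReal.coe_neg, ← sub_eq_add_neg, EReal.le_sub_iff_add_le (by simp) (by simp), ← EReal.coe_add]
    exact h
  · simp

include hF₁ hF₂ in
theorem D2_le_D1 : sSup { e : EReal | ∃ φ ∈ lamRSet C F₁ F₂,
            e = (((∫ x, φ.1 x ∂μ₁) + ∫ x, φ.2 x ∂μ₂ : ℝ) : EReal) } ≤
      sSup { e : EReal | ∃ φ ∈ lamSet C F₁ F₂,
            e = eIntegral μ₁ (fun x => F₁.circ (φ.1 x)) +
                eIntegral μ₂ (fun x => F₂.circ (φ.2 x)) } := by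
  apply sSup_le
  rintro _ ⟨ψ, ⟨h1, h2, h3⟩, rfl⟩
  obtain ⟨φ₁, a1, b1⟩ := conj_exists F₁ hF₁ ψ.1 h1
  obtain ⟨φ₂, a2, b2⟩ := conj_exists F₂ hF₂ ψ.2 h2
  refine le_trans ?_ (le_sSup ⟨(φ₁, φ₂), (mem_lamSet C F₁ F₂ hF₁ hF₂ _).2 fun x p => ?_, rfl⟩)
  · rw [eI_circ F₁ hF₁, eI_circ F₂ hF₂, ← EReal.coe_add, EReal.coe_le_coe_iff]
    exact add_le_add (integral_mono (ψ.1.integrable _) (circR_int' F₁ hF₁ μ₁ φ₁) b1)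
      (integral_mono (ψ.2.integrable _) (circR_int' F₂ hF₂ μ₂ φ₂) b2)
  · have h := h3 x p
    rw [← a1] at h
    simp only [← a2] at h
    rw [eIntegral_coe (φ₂.integrable _), ← EReal.coe_add] at h
    exact h

include hF₁ hF₂ in
theorem D1_le_D2 : sSup { e : EReal | ∃ φ ∈ lamSet C F₁ F₂,
            e = eIntegral μ₁ (fun x => F₁.circ (φ.1 x)) +
                eIntegral μ₂ (fun x => F₂.circ (φ.2 x)) } ≤ sSup { e : EReal | ∃ φ ∈ lamRSet C F₁ F₂,
            e = (((∫ x, φ.1 x ∂μ₁) + ∫ x, φ.2 x ∂μ₂ : ℝ) : EReal) } := by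
  apply sSup_le
  rintro _ ⟨φ, hφ, rfl⟩
  rw [mem_lamSet C F₁ F₂ hF₁ hF₂] at hφ
  rw [eI_circ F₁ hF₁, eI_circ F₂ hF₂, ← EReal.coe_add]
  set v := ∫ x, F₁.circR (φ.1 x) ∂μ₁ + ∫ x, F₂.circR (φ.2 x) ∂μ₂
  set m := μ₁.real univ + μ₂.real univ
  have ht : Tendsto (fun ε : ℝ => ((v - ε * m : ℝ) : EReal)) (𝓝[>] 0) (𝓝 (v : EReal)) := by
    have : Continuous (fun ε : ℝ => ((v - ε * m : ℝ) : EReal)) := continuous_coe_real_ereal.comp (by fun_prop)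
    have := this.tendsto 0
    simp only [zero_mul, sub_zero] at this
    exact this.mono_left nhdsWithin_le_nhds
  refine le_of_tendsto ht ?_
  filter_upwards [self_mem_nhdsWithin] with ε hε
  obtain ⟨ψ₁, a1, b1, e1, -⟩ := circ_exists F₁ hF₁ φ.1 ε hε
  obtain ⟨ψ₂, a2, b2, e2, -⟩ := circ_exists F₂ hF₂ φ.2 ε hε
  refine le_sSup ⟨(ψ₁, ψ₂), ⟨a1, a2, fun x p => ?_⟩, ?_⟩
  · refine le_trans (add_le_add (b1 x) (eIntegral_mono b2)) ?_
    rw [eIntegral_coe (φ.2.integrable _), ← EReal.coe_add]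
    exact hφ x p
  · simp only [e1, e2]
    rw [integral_sub (circR_int' F₁ hF₁ μ₁ φ.1) (integrable_const _), integral_sub (circR_int' F₂ hF₂ μ₂ φ.2) (integrable_const _)]
    simp only [integral_const, smul_eq_mul]
    congr 1
    simp only [v, m]; ring
end
end

noncomputable section
open MeasureTheory Filter Set Topology TopologicalSpace
open scoped ENNReal NNReal BoundedContinuousFunction
set_option linter.unusedSectionVars false
set_option linter.style.haveILetI false

abbrev WW := HK × ProbabilityMeasure HK

lemma pm_int_cont (f : C(HK, ℝ)) : Continuous (fun p : ProbabilityMeasure HK => ∫ x, f x ∂(p : Measure HK)) :=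
  (ProbabilityMeasure.continuous_integral_boundedContinuousFunction (BoundedContinuousFunction.mkOfCompact f))

lemma cint (m : Measure HK) [IsFiniteMeasure m] (f : C(HK, ℝ)) : Integrable f m :=
  (BoundedContinuousFunction.mkOfCompact f).integrable m

lemma cint' {W : Type*} [TopologicalSpace W] [CompactSpace W] [MeasurableSpace W] [BorelSpace W]
    (m : Measure W) [IsFiniteMeasure m] (f : C(W, ℝ)) : Integrable f m :=
  (BoundedContinuousFunction.mkOfCompact f).integrable m

def Tmap : (C(HK, ℝ) × C(HK, ℝ)) →ₗ[ℝ] C(WW, ℝ) where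
  toFun φ := ⟨fun w => φ.1 w.1 + ∫ x, φ.2 x ∂(w.2 : Measure HK), by
    have := (pm_int_cont φ.2).comp (continuous_snd (X := HK))
    exact (φ.1.continuous.comp continuous_fst).add this⟩
  map_add' φ ψ := by
    ext w
    simp only [ContinuousMap.coe_mk, Prod.fst_add, Prod.snd_add, ContinuousMap.add_apply]
    rw [integral_add (cint _ _) (cint _ _)]
    ring
  map_smul' r φ := by
    ext w
    simp only [ContinuousMap.coe_mk, Prod.smul_fst, Prod.smul_snd, ContinuousMap.smul_apply, smul_eq_mul, RingHom.id_apply]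
    rw [integral_const_mul]
    ring

lemma bary_int (P : Measure WW) [IsFiniteMeasure P] (f : C(HK, ℝ)) :
    ∫ w, ∫ x, f x ∂(w.2 : Measure HK) ∂P = ∫ x, f x ∂(P.snd.bind (idK HK)) := by
  rw [integral_bind' _ _ _ (cint _ f), Measure.snd, integral_map measurable_snd.aemeasurable]
  · rfl
  · exact (pm_int_cont f).aestronglyMeasurable

lemma T_int (P : Measure WW) [IsFiniteMeasure P] (φ : C(HK, ℝ) × C(HK, ℝ)) :
    ∫ w, Tmap φ w ∂P = ∫ x, φ.1 x ∂P.fst + ∫ x, φ.2 x ∂(P.snd.bind (idK HK)) := by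
  rw [← bary_int, Measure.fst, integral_map measurable_fst.aemeasurable φ.1.continuous.aestronglyMeasurable]
  have h1 : Integrable (fun w : WW => φ.1 w.1) P := cint' P (φ.1.comp ⟨Prod.fst, continuous_fst⟩)
  have h2 : Integrable (fun w : WW => ∫ x, φ.2 x ∂(w.2 : Measure HK)) P :=
    cint' P ⟨_, (pm_int_cont φ.2).comp (continuous_snd (X := HK))⟩
  rw [← integral_add h1 h2]
  rfl

lemma circR_intC (F : EntropyFn) (h : F.Superlinear) (m : Measure HK) [IsFiniteMeasure m] (f : C(HK, ℝ)) :
    Integrable (fun x => F.circR (f x)) m := circR_int' F h m (BoundedContinuousFunction.mkOfCompact f)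

lemma G_concave (F : EntropyFn) (h : F.Superlinear) (m : Measure HK) [IsFiniteMeasure m] (f g : C(HK, ℝ)) {a b : ℝ}
    (ha : 0 ≤ a) (hb : 0 ≤ b) (hab : a + b = 1) :
    a * ∫ x, F.circR (f x) ∂m + b * ∫ x, F.circR (g x) ∂m ≤ ∫ x, F.circR ((a • f + b • g) x) ∂m := by
  rw [← integral_const_mul, ← integral_const_mul,
    ← integral_add ((circR_intC F h m f).const_mul a) ((circR_intC F h m g).const_mul b)]
  refine integral_mono (((circR_intC F h m f).const_mul a).add ((circR_intC F h m g).const_mul b)) (circR_intC F h m _) fun x => ?_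
  exact (F.circR_concave h).2 (mem_univ (f x)) (mem_univ (g x)) ha hb hab

theorem strongA (F₁ F₂ : EntropyFn) (hF₁ : F₁.Superlinear) (hF₂ : F₂.Superlinear)
    (m₁ m₂ : Measure HK) [IsFiniteMeasure m₁] [IsFiniteMeasure m₂] (𝒞 : Set C(WW, ℝ)) (h𝒞 : Convex ℝ 𝒞)
    (D : ℝ) (hD : ∀ φ : C(HK, ℝ) × C(HK, ℝ), ∀ c ∈ 𝒞, (∀ w, Tmap φ w < c w) →
      ∫ x, F₁.circR (φ.1 x) ∂m₁ + ∫ x, F₂.circR (φ.2 x) ∂m₂ ≤ D) (c0 : C(WW, ℝ)) (hc0 : c0 ∈ 𝒞) :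
    ∃ P : Measure WW, IsFiniteMeasure P ∧ ∀ φ : C(HK, ℝ) × C(HK, ℝ), ∀ c ∈ 𝒞,
      ∫ x, F₁.circR (φ.1 x) ∂m₁ + ∫ x, F₂.circR (φ.2 x) ∂m₂ + ∫ w, c w ∂P ≤
       D + (∫ x, φ.1 x ∂P.fst + ∫ x, φ.2 x ∂(P.snd.bind (idK HK))) := by
  obtain ⟨P, hP, h⟩ := hb_riesz Tmap (fun φ => ∫ x, F₁.circR (φ.1 x) ∂m₁ + ∫ x, F₂.circR (φ.2 x) ∂m₂) ⟨convex_univ, by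
    intro φ _ ψ _ a b ha hb hab
    have h1 := G_concave F₁ hF₁ m₁ φ.1 ψ.1 ha hb hab
    have h2 := G_concave F₂ hF₂ m₂ φ.2 ψ.2 ha hb hab
    simp only [smul_eq_mul, Prod.fst_add, Prod.snd_add, Prod.smul_fst, Prod.smul_snd]
    linarith⟩ 𝒞 h𝒞 D hD (ContinuousMap.const _ (-‖c0‖ - 1), 0) c0 hc0 (by
      intro w
      have := (abs_le.1 (c0.norm_coe_le_norm w)).1
      have e : Tmap (ContinuousMap.const _ (-‖c0‖ - 1), 0) w = -‖c0‖ - 1 := by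
        simp [Tmap]
      rw [e]; linarith)
  refine ⟨P, hP, fun φ c hc => ?_⟩
  rw [← T_int]
  exact h φ c hc

theorem strongB (F₁ F₂ : EntropyFn) (hF₁ : F₁.Superlinear) (hF₂ : F₂.Superlinear)
    (m₁ m₂ ν₁ ν₂ : Measure HK) [IsFiniteMeasure m₁] [IsFiniteMeasure m₂] [IsFiniteMeasure ν₁] [IsFiniteMeasure ν₂] (D : ℝ)
    (h : ∀ φ : C(HK, ℝ) × C(HK, ℝ), 
      ∫ x, F₁.circR (φ.1 x) ∂m₁ + ∫ x, F₂.circR (φ.2 x) ∂m₂ ≤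
       D + (∫ x, φ.1 x ∂ν₁ + ∫ x, φ.2 x ∂ν₂)) :
    ν₁ ≪ m₁ ∧ ν₂ ≪ m₂ ∧ (∫⁻ x, F₁.F (ν₁.rnDeriv m₁ x).toReal ∂m₁) ≠ ∞ ∧ (∫⁻ x, F₂.F (ν₂.rnDeriv m₂ x).toReal ∂m₂) ≠ ∞ ∧
     (∫⁻ x, F₁.F (ν₁.rnDeriv m₁ x).toReal ∂m₁).toReal + (∫⁻ x, F₂.F (ν₂.rnDeriv m₂ x).toReal ∂m₂).toReal ≤ D := by
  have pos : ∀ (F : EntropyFn) (hF : F.Superlinear) (m : Measure HK), 0 ≤ ∫ x, F.circR 0 ∂m :=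
    fun F hF m => integral_nonneg fun x => F.circR_zero_nonneg hF
  have s1 : ∀ φ₂ : C(HK, ℝ), ν₁ ≪ m₁ ∧ ∫⁻ x, F₁.F (ν₁.rnDeriv m₁ x).toReal ∂m₁ ≤
      ENNReal.ofReal (D - (∫ x, F₂.circR (φ₂ x) ∂m₂ - ∫ x, φ₂ x ∂ν₂)) ∧
      0 ≤ (D - (∫ x, F₂.circR (φ₂ x) ∂m₂ - ∫ x, φ₂ x ∂ν₂)) := by
    intro φ₂
    have := F₁.ent_lemma hF₁ m₁ ν₁ (D - (∫ x, F₂.circR (φ₂ x) ∂m₂ - ∫ x, φ₂ x ∂ν₂)) (fun φ => by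
      have := h (φ.toContinuousMap, φ₂)
      simp only [BoundedContinuousFunction.coe_toContinuousMap] at this
      linarith)
    refine ⟨this.1, this.2, ?_⟩
    have h0 := h (0, φ₂)
    have := pos F₁ hF₁ m₁
    simp only [ContinuousMap.zero_apply, integral_zero] at h0
    linarith
  set A₁ := ∫⁻ x, F₁.F (ν₁.rnDeriv m₁ x).toReal ∂m₁
  have fin1 : A₁ ≠ ∞ := ne_top_of_le_ne_top ENNReal.ofReal_ne_top (s1 0).2.1
  have s1' : ∀ φ₂ : C(HK, ℝ), ∫ x, F₂.circR (φ₂ x) ∂m₂ - ∫ x, φ₂ x ∂ν₂ ≤ D - A₁.toReal := by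
    intro φ₂
    have := ENNReal.toReal_le_of_le_ofReal (s1 φ₂).2.2 (s1 φ₂).2.1
    linarith
  have s2 := F₂.ent_lemma hF₂ m₂ ν₂ (D - A₁.toReal) (fun φ => s1' φ.toContinuousMap)
  have hB : 0 ≤ D - A₁.toReal := by
    have h0 := s1' 0
    have := pos F₂ hF₂ m₂
    simp only [ContinuousMap.zero_apply, integral_zero] at h0
    linarith
  refine ⟨(s1 0).1, s2.1, fin1, ne_top_of_le_ne_top ENNReal.ofReal_ne_top s2.2, ?_⟩
  have := ENNReal.toReal_le_of_le_ofReal hB s2.2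
  linarith
end

noncomputable section
open MeasureTheory Filter Set Topology TopologicalSpace
open scoped ENNReal NNReal BoundedContinuousFunction
set_option linter.unusedSectionVars false
set_option linter.style.haveILetI false

lemma ac_pull {X Y : Type*} [MeasurableSpace X] [MeasurableSpace Y] {i : X → Y} (hi : MeasurableEmbedding i)
    (μ ν : Measure X) (h : ν.map i ≪ μ.map i) : ν ≪ μ := by
  intro s hs
  have h1 : μ.map i (i '' s) = 0 := by rw [hi.map_apply, preimage_image_eq _ hi.injective, hs]
  have h2 := h h1
  rwa [hi.map_apply, preimage_image_eq _ hi.injective] at h2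

lemma ent_pull {X Y : Type*} [MeasurableSpace X] [MeasurableSpace Y] {i : X → Y} (hi : MeasurableEmbedding i)
    (μ ν : Measure X) [IsFiniteMeasure μ] [IsFiniteMeasure ν] (F : EntropyFn) :
    ∫⁻ y, F.F ((ν.map i).rnDeriv (μ.map i) y).toReal ∂(μ.map i) = ∫⁻ x, F.F (ν.rnDeriv μ x).toReal ∂μ := by
  rw [hi.lintegral_map]
  apply lintegral_congr_ae
  filter_upwards [hi.rnDeriv_map ν μ] with x hx
  rw [hx]

section
variable {X₁ X₂ : Type*} [TopologicalSpace X₁] [PolishSpace X₁] [MeasurableSpace X₁] [BorelSpace X₁]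
  [TopologicalSpace X₂] [PolishSpace X₂]
  [MeasurableSpace X₂] [BorelSpace X₂] [Nonempty X₂]

theorem disint (P : Measure (X₁ × ProbabilityMeasure X₂)) [IsFiniteMeasure P]
    (c : X₁ × ProbabilityMeasure X₂ → ℝ≥0∞) (hc : LowerSemicontinuous c) (hconv : ∀ x, PMConvex (fun p => c (x, p))) :
    ∃ (γ : Measure (X₁ × X₂)) (hγ : IsFiniteMeasure γ), γ.fst = P.fst ∧ γ.snd = P.snd.bind (idK X₂) ∧
      ∫⁻ x, c (x, kpm γ.condKernel x) ∂γ.fst ≤ ∫⁻ z, c z ∂P := by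
  haveI : Nonempty (ProbabilityMeasure X₂) := ⟨⟨Measure.dirac (Classical.arbitrary X₂), inferInstance⟩⟩
  let κ' := P.condKernel
  let κ : ProbabilityTheory.Kernel X₁ X₂ := ProbabilityTheory.Kernel.comp (idK X₂) κ'
  haveI : ProbabilityTheory.IsMarkovKernel κ := inferInstance
  let γ := P.fst.compProd κ
  have hf : γ.fst = P.fst := Measure.fst_compProd _ _
  have hs : γ.snd = P.snd.bind (idK X₂) := by
    have h1 : γ.snd = P.fst.bind κ := Measure.snd_compProd _ _
    have h2 : P.snd = P.fst.bind κ' := by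
      conv_lhs => rw [← P.disintegrate P.condKernel]
      exact Measure.snd_compProd _ _
    rw [h1, h2, Measure.bind_bind κ'.measurable.aemeasurable (idK X₂).measurable.aemeasurable]
    congr 1
  have hk : ∀ᵐ x ∂γ.fst, κ x = γ.condKernel x :=
    ProbabilityTheory.eq_condKernel_of_measure_eq_compProd κ (by rw [hf])
  refine ⟨γ, inferInstance, hf, hs, ?_⟩
  have e1 : ∫⁻ x, c (x, kpm γ.condKernel x) ∂γ.fst = ∫⁻ x, c (x, kpm κ x) ∂P.fst := by
    refine Eq.trans ?_ (congrArg (fun m => ∫⁻ x, c (x, kpm κ x) ∂m) hf)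
    apply lintegral_congr_ae
    filter_upwards [hk] with x hx
    congr 2
    apply Subtype.ext
    exact hx.symm
  rw [e1]
  conv_rhs => rw [← P.disintegrate P.condKernel]
  rw [Measure.lintegral_compProd hc.measurable]
  refine lintegral_mono fun x => ?_
  refine pm_jensen (fun p => c (x, p)) ?_ (hconv x) (κ' x) (kpm κ x) ?_
  · intro p y hy
    have hcx : Continuous (fun p : ProbabilityMeasure X₂ => (x, p)) := by fun_prop
    exact (hcx.tendsto p).eventually (hc (x, p) y hy)
  · exact ProbabilityTheory.Kernel.comp_apply _ _ _

theorem pullP (i₁ : X₁ → HK) (hi₁ : IsEmbedding i₁) (i₂ : X₂ → HK) (hi₂ : IsEmbedding i₂)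
    (μ₁ : Measure X₁) (μ₂ : Measure X₂) (P : Measure WW) [IsFiniteMeasure P]
    (h1 : P.fst ≪ μ₁.map i₁) (h2 : P.snd.bind (idK HK) ≪ μ₂.map i₂) :
    ∃ P' : Measure (X₁ × ProbabilityMeasure X₂), IsFiniteMeasure P' ∧
      P = P'.map (Prod.map i₁ (pmap i₂ hi₂.continuous.measurable)) ∧
      P.fst = P'.fst.map i₁ ∧ P.snd.bind (idK HK) = (P'.snd.bind (idK X₂)).map i₂ := by
  have m1 := emb_meas hi₁
  have m2 := emb_meas hi₂
  have mp := pmap_measEmb hi₂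
  have mι := m1.prodMap mp
  have z1 : P (Prod.fst ⁻¹' (range i₁)ᶜ) = 0 := by
    rw [← Measure.fst_apply m1.measurableSet_range.compl]
    apply h1
    rw [m1.map_apply]; simp
  have z2 : P (Prod.snd ⁻¹' (range (pmap i₂ hi₂.continuous.measurable))ᶜ) = 0 := by
    rw [← Measure.snd_apply mp.measurableSet_range.compl]
    have : (P.snd.bind (idK HK)) (range i₂)ᶜ = 0 := by
      apply h2
      rw [m2.map_apply]; simp
    rw [Measure.bind_apply m2.measurableSet_range.compl (idK HK).measurable.aemeasurable,
      lintegral_eq_zero_iff ((idK HK).measurable_coe m2.measurableSet_range.compl)] at this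
    rw [range_pmap hi₂]
    exact this
  have z : P (range (Prod.map i₁ (pmap i₂ hi₂.continuous.measurable)))ᶜ = 0 := by
    refine measure_mono_null ?_ (measure_union_null z1 z2)
    intro w hw
    rw [Set.range_prodMap] at hw
    by_contra hcon
    simp only [mem_union, mem_preimage, mem_compl_iff, not_or, not_not] at hcon
    exact hw hcon
  refine ⟨P.comap (Prod.map i₁ (pmap i₂ hi₂.continuous.measurable)), inferInstance, ?_⟩
  set P' := P.comap (Prod.map i₁ (pmap i₂ hi₂.continuous.measurable))
  have e : P = P'.map (Prod.map i₁ (pmap i₂ hi₂.continuous.measurable)) := by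
    rw [mι.map_comap, Measure.restrict_eq_self_of_ae_mem]
    exact z
  refine ⟨e, ?_, ?_⟩
  · rw [e, Measure.fst, Measure.fst, Measure.map_map measurable_fst mι.measurable, Measure.map_map m1.measurable measurable_fst]
    rfl
  · have e2 : P.snd = P'.snd.map (pmap i₂ hi₂.continuous.measurable) := by
      rw [e, Measure.snd, Measure.snd, Measure.map_map measurable_snd mι.measurable, Measure.map_map mp.measurable measurable_snd]
      rfl
    rw [e2]
    ext s hs
    rw [Measure.bind_apply hs (idK HK).measurable.aemeasurable, mp.lintegral_map, m2.map_apply,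
      Measure.bind_apply (m2.measurable hs) (idK X₂).measurable.aemeasurable]
    refine lintegral_congr fun p => ?_
    rw [idK_apply, idK_apply, coe_pmap, m2.map_apply]
end
end

noncomputable section
open MeasureTheory Filter Set Topology TopologicalSpace
open scoped ENNReal NNReal BoundedContinuousFunction
set_option linter.unusedSectionVars false
set_option linter.style.haveILetI false

section
variable {X₁ X₂ : Type*} [TopologicalSpace X₁] [PolishSpace X₁] [MeasurableSpace X₁] [BorelSpace X₁]
  [TopologicalSpace X₂] [PolishSpace X₂]
  [MeasurableSpace X₂] [BorelSpace X₂] [Nonempty X₂]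

theorem strong_duality (C : X₁ → ProbabilityMeasure X₂ → EReal) (c : X₁ × ProbabilityMeasure X₂ → ℝ≥0∞) (hc : LowerSemicontinuous c)
    (hconv : ∀ x, PMConvex (fun p => c (x, p)))
    (K : ℝ) (hC : ∀ x p, C x p = (c (x, p) : EReal) + (K : EReal)) (F₁ F₂ : EntropyFn)
    (hF₁ : F₁.Superlinear) (hF₂ : F₂.Superlinear)
    (μ₁ : Measure X₁) (μ₂ : Measure X₂) [IsFiniteMeasure μ₁] [IsFiniteMeasure μ₂]
    (D : ℝ) (hD : ∀ φ ∈ lamSet C F₁ F₂, ∫ x, F₁.circR (φ.1 x) ∂μ₁ + ∫ x, F₂.circR (φ.2 x) ∂μ₂ ≤ D) :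
    ∃ (γ : Measure (X₁ × X₂)) (hγ : IsFiniteMeasure γ), wCost C F₁ F₂ μ₁ μ₂ γ hγ ≤ (D : EReal) := by
  obtain ⟨i₁, hi₁⟩ := exists_emb X₁
  obtain ⟨i₂, hi₂⟩ := exists_emb X₂
  have m1 := emb_meas hi₁
  have m2 := emb_meas hi₂
  have mp := pmap_measEmb hi₂
  have mι := m1.prodMap mp
  have hι : IsEmbedding (Prod.map i₁ (pmap i₂ hi₂.continuous.measurable)) := hi₁.prodMap (pmap_isEmbedding i₂ hi₂)
  obtain ⟨ck, ckm, ck0, cks⟩ := lsc_approx (Prod.map i₁ (pmap i₂ hi₂.continuous.measurable)) hι.isInducing c hc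
  let 𝒞 : Set C(WW, ℝ) := {f | ∃ k, ∀ w, f w ≤ K + ck k w}
  have h𝒞 : Convex ℝ 𝒞 := by
    rintro f ⟨k, hk⟩ g ⟨l, hl⟩ a b ha hb hab
    refine ⟨max k l, fun w => ?_⟩
    have h1 := (hk w).trans (add_le_add_right (ckm w (le_max_left k l)) K)
    have h2 := (hl w).trans (add_le_add_right (ckm w (le_max_right k l)) K)
    simp only [ContinuousMap.add_apply, ContinuousMap.smul_apply, smul_eq_mul]
    calc a * f w + b * g w ≤ a * (K + ck (max k l) w) + b * (K + ck (max k l) w) :=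
          add_le_add (mul_le_mul_of_nonneg_left h1 ha) (mul_le_mul_of_nonneg_left h2 hb)
      _ = (a + b) * (K + ck (max k l) w) := by ring
      _ = _ := by rw [hab, one_mul]
  obtain ⟨P, hP, hPi⟩ := strongA F₁ F₂ hF₁ hF₂ (μ₁.map i₁) (μ₂.map i₂) 𝒞 h𝒞 D (by
    rintro φ f ⟨k, hk⟩ hlt
    rw [m1.integral_map, m2.integral_map]
    refine hD ((BoundedContinuousFunction.mkOfCompact φ.1).compContinuous ⟨i₁, hi₁.continuous⟩,
      (BoundedContinuousFunction.mkOfCompact φ.2).compContinuous ⟨i₂, hi₂.continuous⟩)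
      ((mem_lamSet C F₁ F₂ hF₁ hF₂ _).2 fun x p => ?_)
    have h1 := (hlt (Prod.map i₁ (pmap i₂ hi₂.continuous.measurable) (x, p))).le.trans (hk _)
    have e1 : Tmap φ (Prod.map i₁ (pmap i₂ hi₂.continuous.measurable) (x, p)) = φ.1 (i₁ x) + ∫ y, φ.2 (i₂ y) ∂(p : Measure X₂) := by
      rw [← m2.integral_map]; rfl
    rw [e1] at h1
    have h2 : ENNReal.ofReal (ck k (Prod.map i₁ (pmap i₂ hi₂.continuous.measurable) (x, p))) ≤ c (x, p) := by
      rw [← cks (x, p)]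
      exact le_iSup (fun k => ENNReal.ofReal (ck k (Prod.map i₁ (pmap i₂ hi₂.continuous.measurable) (x, p)))) k
    rw [hC]
    refine le_trans (EReal.coe_le_coe_iff.2 h1) ?_
    rw [add_comm K, EReal.coe_add]
    refine add_le_add_left ?_ _
    refine le_trans ?_ (EReal.coe_ennreal_le_coe_ennreal_iff.2 h2)
    rw [EReal.coe_ennreal_ofReal, max_eq_left (ck0 _ _)])
    (ContinuousMap.const _ K) ⟨0, fun w => by simpa using ck0 0 w⟩
  have hB := fun k => strongB F₁ F₂ hF₁ hF₂ (μ₁.map i₁) (μ₂.map i₂) P.fst (P.snd.bind (idK HK))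
    (D - (K * P.real univ + ∫ w, ck k w ∂P)) (fun φ => by
      have h := hPi φ (ContinuousMap.const WW K + ck k : C(WW, ℝ)) ⟨k, fun w => le_rfl⟩
      have e : ∫ w, (ContinuousMap.const WW K + ck k : C(WW, ℝ)) w ∂P = K * P.real univ + ∫ w, ck k w ∂P := by
        have : ∀ w, (ContinuousMap.const WW K + ck k : C(WW, ℝ)) w = K + ck k w := fun w => rfl
        simp only [this]
        rw [integral_add (integrable_const _) (cint' P _)]
        simp [mul_comm]
      rw [e] at h
      linarith)
  obtain ⟨P', hP', e0, e1, e2⟩ := pullP i₁ hi₁ i₂ hi₂ μ₁ μ₂ P (hB 0).1 (hB 0).2.1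
  obtain ⟨γ, hγ, g1, g2, g3⟩ := disint P' c hc hconv
  haveI := hγ
  rw [e2, e1, ← g1, ← g2, ent_pull m1, ent_pull m2] at hB
  have ac1 : γ.fst ≪ μ₁ := ac_pull m1 _ _ (hB 0).1
  have ac2 : γ.snd ≪ μ₂ := ac_pull m2 _ _ (hB 0).2.1
  refine ⟨γ, hγ, ?_⟩
  rw [wCost_eq C c hc K hC, entF_of_ac ac1, entF_of_ac ac2]
  have f1 := (hB 0).2.2.1
  have f2 := (hB 0).2.2.2.1
  have hB' := fun k => (hB k).2.2.2.2
  set A₁ := ∫⁻ x, F₁.F (γ.fst.rnDeriv μ₁ x).toReal ∂μ₁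
  set A₂ := ∫⁻ x, F₂.F (γ.snd.rnDeriv μ₂ x).toReal ∂μ₂
  set B := D - K * P.real univ - A₁.toReal - A₂.toReal with hBdef
  have hB0 : 0 ≤ B := by
    have := hB' 0
    have : 0 ≤ ∫ w, ck 0 w ∂P := integral_nonneg fun w => ck0 0 w
    linarith
  have hI : ∫⁻ z, c z ∂P' ≤ ENNReal.ofReal B := by
    have : ∀ z, c z = ⨆ k, ENNReal.ofReal (ck k (Prod.map i₁ (pmap i₂ hi₂.continuous.measurable) z)) := fun z => (cks z).symm
    simp only [this]
    rw [lintegral_iSup]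
    · refine iSup_le fun k => ?_
      rw [← mι.lintegral_map (fun w => ENNReal.ofReal (ck k w)), ← e0,
        ← ofReal_integral_eq_lintegral_ofReal (cint' P (ck k)) (ae_of_all _ (ck0 k))]
      apply ENNReal.ofReal_le_ofReal
      have := hB' k
      linarith
    · intro k
      exact ((ck k).continuous.measurable.comp mι.measurable).ennreal_ofReal
    · intro k l hkl z
      exact ENNReal.ofReal_le_ofReal (ckm _ hkl)
  have hI2 := g3.trans hI
  set I := ∫⁻ x, c (x, kpm γ.condKernel x) ∂γ.fst
  have fI : I ≠ ∞ := ne_top_of_le_ne_top ENNReal.ofReal_ne_top hI2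
  have hI3 : I.toReal ≤ B := ENNReal.toReal_le_of_le_ofReal hB0 hI2
  have eK : ∫ _, K ∂γ.fst = K * P.real univ := by
    rw [integral_const, smul_eq_mul, mul_comm, g1]
    congr 1
    simp only [Measure.real]
    rw [Measure.fst_univ, e0, mι.map_apply]
    simp
  rw [eK, ← EReal.coe_ennreal_toReal f1, ← EReal.coe_ennreal_toReal f2, ← EReal.coe_ennreal_toReal fI,
    ← EReal.coe_add, ← EReal.coe_add, ← EReal.coe_add, EReal.coe_le_coe_iff]
  linarith
end
end

theorem stmt0
    {X₁ : Type*} [MetricSpace X₁] [PolishSpace X₁] [MeasurableSpace X₁] [BorelSpace X₁]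
    [LocallyCompactSpace X₁]
    {X₂ : Type*} [MetricSpace X₂] [PolishSpace X₂] [MeasurableSpace X₂] [BorelSpace X₂]
    [LocallyCompactSpace X₂] [Nonempty X₂]
    (C : X₁ → ProbabilityMeasure X₂ → EReal)
    (hClsc : LowerSemicontinuous fun q : X₁ × ProbabilityMeasure X₂ => C q.1 q.2)
    (hCbdd : ∃ K : ℝ, ∀ x p, (K : EReal) ≤ C x p)
    (hCconv : ∀ (x : X₁) (p q m : ProbabilityMeasure X₂) (t : ℝ), 0 ≤ t → t ≤ 1 →
      (m : Measure X₂) = ENNReal.ofReal t • (p : Measure X₂)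
          + ENNReal.ofReal (1 - t) • (q : Measure X₂) →
      C x m ≤ (t : EReal) * C x p + ((1 - t : ℝ) : EReal) * C x q)
    (F₁ F₂ : EntropyFn) (hF₁ : F₁.Superlinear) (hF₂ : F₂.Superlinear) (hBM : HasBM X₂ F₂)
    (μ₁ : Measure X₁) (μ₂ : Measure X₂) [IsFiniteMeasure μ₁] [IsFiniteMeasure μ₂] :
    wOpt C F₁ F₂ μ₁ μ₂
        = sSup { e : EReal | ∃ φ ∈ lamSet C F₁ F₂,
            e = eIntegral μ₁ (fun x => F₁.circ (φ.1 x)) +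
                eIntegral μ₂ (fun x => F₂.circ (φ.2 x)) } ∧
    wOpt C F₁ F₂ μ₁ μ₂
        = sSup { e : EReal | ∃ φ ∈ lamRSet C F₁ F₂,
            e = (((∫ x, φ.1 x ∂μ₁) + ∫ x, φ.2 x ∂μ₂ : ℝ) : EReal) } ∧
    wOpt C F₁ F₂ μ₁ μ₂
        = sSup { e : EReal | ∃ φ : X₂ →ᵇ ℝ,
            e = eIntegral μ₁ (fun x₁ => F₁.circ (RCfun C φ x₁)) +
                eIntegral μ₂ (fun x₂ => F₂.circ (((-(φ x₂) : ℝ) : EReal))) } := by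
  obtain ⟨K, hK⟩ := hCbdd
  obtain ⟨c, hc, hC, hconv⟩ := cost_decomp C hClsc K hK hCconv
  have h21 := D2_le_D1 C F₁ F₂ hF₁ hF₂ μ₁ μ₂
  have h12 := D1_le_D2 C F₁ F₂ hF₁ hF₂ μ₁ μ₂
  have h13 := D1_le_D3 C F₁ F₂ hF₁ hF₂ μ₁ μ₂
  have h3w : sSup { e : EReal | ∃ φ : X₂ →ᵇ ℝ,
            e = eIntegral μ₁ (fun x₁ => F₁.circ (RCfun C φ x₁)) +
                eIntegral μ₂ (fun x₂ => F₂.circ (((-(φ x₂) : ℝ) : EReal))) } ≤ wOpt C F₁ F₂ μ₁ μ₂ := by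
    refine sSup_le ?_
    rintro _ ⟨φ, rfl⟩
    refine le_sInf ?_
    rintro _ ⟨γ, hγ, rfl⟩
    exact weak_duality C c hc K hC F₁ F₂ hF₁ hF₂ μ₁ μ₂ γ hγ φ
  have hw1 : wOpt C F₁ F₂ μ₁ μ₂ ≤ sSup { e : EReal | ∃ φ ∈ lamSet C F₁ F₂,
            e = eIntegral μ₁ (fun x => F₁.circ (φ.1 x)) +
                eIntegral μ₂ (fun x => F₂.circ (φ.2 x)) } := by
    set S := sSup { e : EReal | ∃ φ ∈ lamSet C F₁ F₂,
            e = eIntegral μ₁ (fun x => F₁.circ (φ.1 x)) +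
                eIntegral μ₂ (fun x => F₂.circ (φ.2 x)) } with hS
    by_cases htop : S = ⊤
    · rw [htop]; exact le_top
    have hle : ∀ φ ∈ lamSet C F₁ F₂,
        ((∫ x, F₁.circR (φ.1 x) ∂μ₁ + ∫ x, F₂.circR (φ.2 x) ∂μ₂ : ℝ) : EReal) ≤ S := by
      intro φ hφ
      rw [hS]
      refine le_sSup ⟨φ, hφ, ?_⟩
      rw [eI_circ F₁ hF₁, eI_circ F₂ hF₂, EReal.coe_add]
    have hbot : S ≠ ⊥ := by
      have hm : ((BoundedContinuousFunction.const X₁ K, 0) : (X₁ →ᵇ ℝ) × (X₂ →ᵇ ℝ)) ∈ lamSet C F₁ F₂ := by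
        refine (mem_lamSet C F₁ F₂ hF₁ hF₂ _).2 fun x p => ?_
        simpa using hK x p
      exact ne_bot_of_le_ne_bot (EReal.coe_ne_bot _) (hle _ hm)
    obtain ⟨γ, hγ, h⟩ := strong_duality C c hc hconv K hC F₁ F₂ hF₁ hF₂ μ₁ μ₂ S.toReal (by
      intro φ hφ
      rw [← EReal.coe_le_coe_iff, EReal.coe_toReal htop hbot]
      exact hle φ hφ)
    rw [EReal.coe_toReal htop hbot] at h
    refine le_trans (sInf_le ?_) h
    exact ⟨γ, hγ, rfl⟩
  have e1 := le_antisymm hw1 (h13.trans h3w)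
  refine ⟨e1, e1.trans (le_antisymm h12 h21), le_antisymm (hw1.trans h13) h3w⟩
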